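/- There exists an absolute constant c (depending only on sup_n m_n) such that for every martingale f ∈ H_{1/2}(G_m) one has ‖ sup_{n∈ℕ} |σ_n f| / log^2(n+1) ‖_{1/2} ≤ c ‖f‖_{H_{1/2}}, where σ_n f = (1/n)Σ_{k=1}^{n} S_k f is the n-th Fejér mean of the Vilenkin-Fourier series. -/

import Mathlib

open MeasureTheory Filter Finset Asymptotics
open scoped ENNReal NNReal

noncomputable section

namespace Vilenkin

/-- The Vilenkin group `G_m`: the complete direct product of the cyclic groups `Z_{m_n}`. -/
abbrev G (m : ℕ → ℕ) := ∀ n, ZMod (m n)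

/-- The generalized number system `M_0 = 1`, `M_{n+1} = m_n M_n`. -/
def MM (m : ℕ → ℕ) : ℕ → ℕ
  | 0 => 1
  | n + 1 => m n * MM m n

/-- The generalized Rademacher functions `r_k(x) = exp(2 π i x_k / m_k)`. -/
def rade (m : ℕ → ℕ) (k : ℕ) (x : G m) : ℂ :=
  Complex.exp (2 * Real.pi * Complex.I * ((x k).val : ℂ) / (m k : ℂ))

/-- The Vilenkin system `ψ_n = ∏_k r_k^{n_k}`, where `n = ∑_k n_k M_k` is the expansion of `n`
in the generalized number system (the digits `n_k = (n / M_k) mod m_k` vanish for `k > n`). -/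
def psi (m : ℕ → ℕ) (n : ℕ) (x : G m) : ℂ :=
  ∏ k ∈ Finset.range (n + 1), rade m k x ^ (n / MM m k % m k)

/-- The Dirichlet kernels `D_n = ∑_{k=0}^{n-1} ψ_k`. -/
def D (m : ℕ → ℕ) (n : ℕ) (x : G m) : ℂ := ∑ k ∈ Finset.range n, psi m k x

/-- The Fejér kernels `K_n = (1/n) ∑_{k=1}^{n} D_k`. -/
def K (m : ℕ → ℕ) (n : ℕ) (x : G m) : ℂ := (n : ℂ)⁻¹ * ∑ k ∈ Finset.Icc 1 n, D m k x

/-- `Q_n = ∑_{k=0}^{n-1} q_k`. -/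
def Q (q : ℕ → ℝ) (n : ℕ) : ℝ := ∑ k ∈ Finset.range n, q k

/-- The Nörlund kernels `F_n = (1/Q_n) ∑_{k=1}^{n} q_{n-k} D_k`. -/
def F (m : ℕ → ℕ) (q : ℕ → ℝ) (n : ℕ) (x : G m) : ℂ :=
  ((Q q n : ℝ) : ℂ)⁻¹ * ∑ k ∈ Finset.Icc 1 n, (q (n - k) : ℂ) * D m k x

/-- The interval (cylinder) `I_n(x) = {y : y_j = x_j for all j < n}`. -/
def cyl (m : ℕ → ℕ) (n : ℕ) (x : G m) : Set (G m) := {y | ∀ j < n, y j = x j}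

/-- The element `s_k e_k` of `G_m` (value `s_k` in coordinate `k`, zero elsewhere). -/
def oneSpike (m : ℕ → ℕ) (k sk : ℕ) : G m := fun j => if j = k then (sk : ZMod (m j)) else 0

/-- The element `s_k e_k + s_l e_l` of `G_m` (for `k ≠ l`). -/
def twoSpike (m : ℕ → ℕ) (k sk l sl : ℕ) : G m :=
  fun j => if j = k then (sk : ZMod (m j)) else if j = l then (sl : ZMod (m j)) else 0

/-- The σ-algebra `𝔉_n` generated by the intervals `I_n(x)`, i.e. by the first `n`
coordinates. -/
def filt (m : ℕ → ℕ) (n : ℕ) : MeasurableSpace (G m) :=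
  MeasurableSpace.comap (fun x (i : Fin n) => x i.val) inferInstance

/-- `f = (f^{(n)})` is a martingale with respect to the filtration `(𝔉_n)` and the measure `μ`. -/
def IsMartingale (m : ℕ → ℕ) (μ : Measure (G m)) (f : ℕ → G m → ℂ) : Prop :=
  (∀ n, Integrable (f n) μ) ∧ (∀ n, Measurable[filt m n] (f n)) ∧
    ∀ n, ∀ s : Set (G m), MeasurableSet[filt m n] s →
      ∫ x in s, f (n + 1) x ∂μ = ∫ x in s, f n x ∂μ

/-- The `L_p`-quasinorm `(∫ g^p dμ)^{1/p}` of a nonnegative (extended-real-valued) function. -/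
def lpNormE (m : ℕ → ℕ) (μ : Measure (G m)) (p : ℝ) (g : G m → ℝ≥0∞) : ℝ≥0∞ :=
  (∫⁻ x, g x ^ p ∂μ) ^ (1 / p)

/-- The martingale Hardy space quasinorm `‖f‖_{H_p} = ‖sup_n |f^{(n)}|‖_p`. -/
def HpNorm (m : ℕ → ℕ) (μ : Measure (G m)) (p : ℝ) (f : ℕ → G m → ℂ) : ℝ≥0∞ :=
  lpNormE m μ p (fun x => ⨆ n, (‖f n x‖₊ : ℝ≥0∞))

/-- The Vilenkin-Fourier coefficients of a martingale:
`f̂(i) = lim_k ∫ f^{(k)} conj ψ_i dμ`. -/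
def mcoef (m : ℕ → ℕ) (μ : Measure (G m)) (f : ℕ → G m → ℂ) (i : ℕ) : ℂ :=
  limUnder atTop fun k => ∫ x, f k x * (starRingEnd ℂ) (psi m i x) ∂μ

/-- The partial sums `S_n f = ∑_{k=0}^{n-1} f̂(k) ψ_k` of the Vilenkin-Fourier series of a
martingale. -/
def mS (m : ℕ → ℕ) (μ : Measure (G m)) (f : ℕ → G m → ℂ) (n : ℕ) (x : G m) : ℂ :=
  ∑ k ∈ Finset.range n, mcoef m μ f k * psi m k x

/-- The Nörlund means `t_n f = (1/Q_n) ∑_{k=1}^{n} q_{n-k} S_k f` of a martingale. -/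
def mT (m : ℕ → ℕ) (q : ℕ → ℝ) (μ : Measure (G m)) (f : ℕ → G m → ℂ) (n : ℕ) (x : G m) : ℂ :=
  ((Q q n : ℝ) : ℂ)⁻¹ * ∑ k ∈ Finset.Icc 1 n, (q (n - k) : ℂ) * mS m μ f k x

/-- The Cesàro numbers `A_0^α = 0`, `A_n^α = (α+1)⋯(α+n)/n!`. -/
def AC (α : ℝ) (n : ℕ) : ℝ :=
  if n = 0 then 0 else (∏ j ∈ Finset.Icc 1 n, (α + (j : ℝ))) / (n.factorial : ℝ)

/-- The `(C,α)` (Cesàro) means `σ_n^α f = (1/A_n^α) ∑_{k=1}^{n} A_{n-k}^{α-1} S_k f` of a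
martingale. -/
def mCes (m : ℕ → ℕ) (α : ℝ) (μ : Measure (G m)) (f : ℕ → G m → ℂ) (n : ℕ) (x : G m) : ℂ :=
  ((AC α n : ℝ) : ℂ)⁻¹ * ∑ k ∈ Finset.Icc 1 n, ((AC (α - 1) (n - k) : ℝ) : ℂ) * mS m μ f k x

/-- The Fejér means `σ_n f = (1/n) ∑_{k=1}^{n} S_k f` of a martingale. -/
def mFej (m : ℕ → ℕ) (μ : Measure (G m)) (f : ℕ → G m → ℂ) (n : ℕ) (x : G m) : ℂ :=
  (n : ℂ)⁻¹ * ∑ k ∈ Finset.Icc 1 n, mS m μ f k x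

/-- The Vilenkin-Fourier coefficients of an integrable function. -/
def fcoef (m : ℕ → ℕ) (μ : Measure (G m)) (g : G m → ℂ) (i : ℕ) : ℂ :=
  ∫ x, g x * (starRingEnd ℂ) (psi m i x) ∂μ

/-- The partial sums of the Vilenkin-Fourier series of an integrable function. -/
def fS (m : ℕ → ℕ) (μ : Measure (G m)) (g : G m → ℂ) (n : ℕ) (x : G m) : ℂ :=
  ∑ k ∈ Finset.range n, fcoef m μ g k * psi m k x

/-- The Nörlund means of an integrable function. -/
def fT (m : ℕ → ℕ) (q : ℕ → ℝ) (μ : Measure (G m)) (g : G m → ℂ) (n : ℕ) (x : G m) : ℂ :=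
  ((Q q n : ℝ) : ℂ)⁻¹ * ∑ k ∈ Finset.Icc 1 n, (q (n - k) : ℂ) * fS m μ g k x

/-!
On the cylinder structure of `G_m` the Fejér kernel satisfies `n |K_n| ≤ 3 B ^ 3 ∑_A Q_A`, where
`Q_A` (`kernelMajorant`) is a sum of indicators of sets that fix all but one of the first `A`
coordinates. Convolving a function of the first `p` coordinates with these majorants costs only a
factor `(p + 1) M_p ^ (1 / 2)` in the quasinorm of `L_{1/2}`, the factor `p + 1` being the number of
levels `A ≤ p`.

Stopping the martingale whenever it grows by a factor `4` splits `f N - f 0` into pieces indexed by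
the level `p` of the stopping time. A piece of level `p` is bounded by a function of the first `p`
coordinates and is annihilated by `K_n` when `n ≤ M_p`; when `M_p ≤ n`, the weight `log² (n + 1)` is
at least `(p + 1) ² / 16`, which absorbs the factor lost above. Since the stopped values grow
geometrically, the square roots of the bounds add up to a multiple of the square root of `f*`.
-/

variable {m : ℕ → ℕ}

/-! ### The generalized number system -/

section NumberSystem

theorem MM_dvd_MM {a b : ℕ} (hab : a ≤ b) : MM m a ∣ MM m b := by
  induction b, hab using Nat.le_induction with
  | base => exact dvd_rfl
  | succ b _ ih => exact ih.trans (Dvd.intro_left _ rfl)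

theorem mul_MM_add_lt_MM_succ {A j r : ℕ} (hj : j < m A) (hr : r < MM m A) :
    j * MM m A + r < MM m (A + 1) :=
  calc j * MM m A + r < (j + 1) * MM m A := by linarith
    _ ≤ MM m (A + 1) := Nat.mul_le_mul_right _ hj

instance neZero_MM [∀ n, NeZero (m n)] (n : ℕ) : NeZero (MM m n) := by
  induction n with
  | zero => exact ⟨one_ne_zero⟩
  | succ n ih => exact ⟨mul_ne_zero (NeZero.ne _) ih.out⟩

theorem MM_mono [∀ n, NeZero (m n)] : Monotone (MM m) :=
  monotone_nat_of_le_succ fun n => Nat.le_mul_of_pos_left _ (NeZero.pos (m n))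

theorem two_pow_sub_mul_MM_le [∀ n, Fact (1 < m n)] {a b : ℕ} (hab : a ≤ b) :
    2 ^ (b - a) * MM m a ≤ MM m b := by
  induction b, hab using Nat.le_induction with
  | base => simp
  | succ b hab ih =>
    rw [Nat.sub_add_comm hab, pow_succ', mul_assoc]
    exact Nat.mul_le_mul (Fact.out (p := 1 < m b)) ih

theorem two_pow_le_MM [∀ n, Fact (1 < m n)] (n : ℕ) : 2 ^ n ≤ MM m n := by
  simpa [MM] using two_pow_sub_mul_MM_le (m := m) n.zero_le

theorem lt_MM [∀ n, Fact (1 < m n)] (n : ℕ) : n < MM m n :=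
  Nat.lt_two_pow_self.trans_le (two_pow_le_MM n)

end NumberSystem

/-! ### Vilenkin characters -/

section Characters

theorem enorm_rade (k : ℕ) (x : G m) : ‖rade m k x‖ₑ = 1 := by
  have h : 2 * Real.pi * Complex.I * ((x k).val : ℂ) / (m k : ℂ)
      = ((2 * Real.pi * (x k).val / m k : ℝ) : ℂ) * Complex.I := by push_cast; ring
  rw [rade, h, ← enorm_norm, Complex.norm_exp_ofReal_mul_I, enorm_one]

theorem rade_congr {k : ℕ} {x y : G m} (h : x k = y k) : rade m k x = rade m k y := by
  simp only [rade, h]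

variable [∀ n, NeZero (m n)]

theorem rade_eq_stdAddChar (k : ℕ) (x : G m) : rade m k x = ZMod.stdAddChar (x k) := by
  rw [ZMod.stdAddChar_apply, ZMod.toCircle_apply, rade]

theorem rade_sub (k : ℕ) (x t : G m) :
    rade m k (x - t) = rade m k x * (starRingEnd ℂ) (rade m k t) := by
  rw [rade_eq_stdAddChar, Pi.sub_apply, sub_eq_add_neg, AddChar.map_add_eq_mul,
    AddChar.map_neg_eq_conj, ← rade_eq_stdAddChar, ← rade_eq_stdAddChar]

theorem psi_sub (n : ℕ) (x t : G m) :
    psi m n (x - t) = psi m n x * (starRingEnd ℂ) (psi m n t) := by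
  simp only [psi, rade_sub, mul_pow, prod_mul_distrib, map_prod, map_pow]

theorem sum_rade_pow (k : ℕ) (x : G m) :
    ∑ i ∈ range (m k), rade m k x ^ i = if x k = 0 then (m k : ℂ) else 0 := by
  split_ifs with hx
  · simp [rade, hx]
  have hpow : rade m k x ^ m k = 1 := by
    rw [rade_eq_stdAddChar, ← AddChar.map_nsmul_eq_pow]
    simp
  have hne : rade m k x - 1 ≠ 0 := by
    rw [sub_ne_zero, rade_eq_stdAddChar,
      ← AddChar.map_zero_eq_one (ZMod.stdAddChar (N := m k))]
    exact ZMod.injective_stdAddChar.ne hx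
  have hgeom := mul_geom_sum (rade m k x) (m k)
  rw [hpow, sub_self] at hgeom
  exact (mul_eq_zero.1 hgeom).resolve_left hne

theorem prod_rade_pow_digit_eq {n a b : ℕ} (hab : a ≤ b) (hn : n < MM m a) (x : G m) :
    ∏ k ∈ range b, rade m k x ^ (n / MM m k % m k)
      = ∏ k ∈ range a, rade m k x ^ (n / MM m k % m k) := by
  refine (prod_subset (range_mono hab) fun k _ hk => ?_).symm
  have hak : a ≤ k := by simpa using hk
  rw [Nat.div_eq_of_lt (hn.trans_le (MM_mono hak)), Nat.zero_mod, pow_zero]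

end Characters

section Digits

variable [∀ n, Fact (1 < m n)]

theorem psi_eq_prod_of_lt {n L : ℕ} (hn : n < MM m L) (x : G m) :
    psi m n x = ∏ k ∈ range L, rade m k x ^ (n / MM m k % m k) := by
  rcases le_total L (n + 1) with hL | hL
  · exact prod_rade_pow_digit_eq hL hn x
  · exact (prod_rade_pow_digit_eq hL ((lt_MM n).trans_le (MM_mono n.le_succ)) x).symm

theorem psi_mul_MM_add {A j r : ℕ} (hj : j < m A) (hr : r < MM m A) (x : G m) :
    psi m (j * MM m A + r) x = rade m A x ^ j * psi m r x := by
  rw [psi_eq_prod_of_lt (mul_MM_add_lt_MM_succ hj hr), psi_eq_prod_of_lt hr, prod_range_succ,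
    mul_comm]
  congr 1
  · rw [mul_comm j, Nat.mul_add_div (NeZero.pos _), Nat.div_eq_of_lt hr, add_zero,
      Nat.mod_eq_of_lt hj]
  · refine prod_congr rfl fun k hk => ?_
    obtain ⟨d, hd⟩ := MM_dvd_MM (m := m) (Nat.succ_le_of_lt (mem_range.1 hk))
    have hsplit : j * MM m A + r = MM m k * (m k * (d * j)) + r := by
      rw [hd, Nat.succ_eq_add_one, MM]; ring
    rw [hsplit, Nat.mul_add_div (NeZero.pos _), Nat.mul_add_mod]

theorem dependsOn_psi {n L : ℕ} (hn : n < MM m L) : DependsOn (psi m n) (Set.Iio L) := by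
  intro x y hxy
  rw [psi_eq_prod_of_lt hn, psi_eq_prod_of_lt hn]
  exact prod_congr rfl fun k hk => by rw [rade_congr (hxy k (by simpa using hk))]

end Digits

/-! ### Dirichlet and Fejér kernels -/

/-- The unnormalized Fejér kernel `n K_n = D_1 + ⋯ + D_n`. -/
def fejerSum (m : ℕ → ℕ) (n : ℕ) (x : G m) : ℂ := ∑ k ∈ range n, D m (k + 1) x

/-- The set of points agreeing with `x` at every place below `A`, except possibly at `s`. For
`A ≤ s` this is the cylinder `I_A(x)`. -/
def freeCyl (m : ℕ → ℕ) (A s : ℕ) (x : G m) : Set (G m) := {y | ∀ j < A, j ≠ s → y j = x j}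

/-- The function `∑_{s ≤ A} M_s M_A 1_{freeCyl A s 0}`, which dominates `M_A |K_{M_A}|` up to a
constant. -/
def kernelMajorant (m : ℕ → ℕ) (A : ℕ) (x : G m) : ℝ≥0∞ :=
  ∑ s ∈ range (A + 1), (freeCyl m A s 0).indicator (fun _ => (MM m s * MM m A : ℝ≥0∞)) x

section FreeCylinders

theorem freeCyl_eq_cyl_of_le {A s : ℕ} (h : A ≤ s) (x : G m) : freeCyl m A s x = cyl m A x :=
  Set.ext fun _ => ⟨fun hy j hj => hy j hj (by lia), fun hy j hj _ => hy j hj⟩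

theorem freeCyl_succ_self (A : ℕ) (x : G m) : freeCyl m (A + 1) A x = cyl m A x :=
  Set.ext fun _ => ⟨fun hy j hj => hy j (by lia) (by lia), fun hy j hj hjA => hy j (by lia)⟩

theorem mem_freeCyl_succ_iff {A s : ℕ} (hs : s ≠ A) {x y : G m} :
    y ∈ freeCyl m (A + 1) s x ↔ y A = x A ∧ y ∈ freeCyl m A s x := by
  refine ⟨fun hy => ⟨hy A (by lia) hs.symm, fun j hj => hy j (by lia)⟩, fun hy j hj hjs => ?_⟩
  obtain hjA | rfl := Nat.lt_succ_iff_lt_or_eq.1 hj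
  exacts [hy.2 j hjA hjs, hy.1]

theorem mem_cyl_succ_iff {A : ℕ} {x y : G m} :
    y ∈ cyl m (A + 1) x ↔ y A = x A ∧ y ∈ cyl m A x := by
  rw [← freeCyl_eq_cyl_of_le le_rfl, mem_freeCyl_succ_iff (by lia),
    freeCyl_eq_cyl_of_le A.le_succ]

end FreeCylinders

section KernelMajorant

theorem kernelMajorant_eq_sum_add (A : ℕ) (x : G m) :
    kernelMajorant m A x =
      ∑ s ∈ range A, (freeCyl m A s 0).indicator (fun _ => (MM m s * MM m A : ℝ≥0∞)) x +
        (cyl m A 0).indicator (fun _ => (MM m A * MM m A : ℝ≥0∞)) x := by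
  rw [kernelMajorant, sum_range_succ, freeCyl_eq_cyl_of_le le_rfl]

theorem indicator_cyl_le_kernelMajorant (A : ℕ) (x : G m) :
    (cyl m A 0).indicator (fun _ => (MM m A * MM m A : ℝ≥0∞)) x ≤ kernelMajorant m A x := by
  rw [kernelMajorant_eq_sum_add]
  exact le_add_self

theorem le_kernelMajorant_succ [∀ n, NeZero (m n)] (A : ℕ) (x : G m) :
    (cyl m A 0).indicator (fun _ => (MM m A * MM m A : ℝ≥0∞)) x ≤ kernelMajorant m (A + 1) x := by
  rw [kernelMajorant_eq_sum_add, sum_range_succ, freeCyl_succ_self]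
  refine le_trans (Set.indicator_le_indicator ?_) (le_add_self.trans le_self_add)
  gcongr
  exact MM_mono A.le_succ

theorem mul_kernelMajorant_add_le_succ [∀ n, NeZero (m n)] {A : ℕ} {x : G m} (hx : x A = 0) :
    m A * kernelMajorant m A x + (cyl m A 0).indicator (fun _ => (MM m A * MM m A : ℝ≥0∞)) x
      ≤ kernelMajorant m (A + 1) x := by
  classical
  have hMM : (MM m (A + 1) : ℝ≥0∞) = m A * MM m A := by simp [MM]
  have hle : (MM m A : ℝ≥0∞) ≤ MM m (A + 1) := by exact_mod_cast MM_mono A.le_succ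
  have hfree : ∀ s ∈ range A,
      m A * (freeCyl m A s 0).indicator (fun _ => (MM m s * MM m A : ℝ≥0∞)) x =
        (freeCyl m (A + 1) s 0).indicator (fun _ => (MM m s * MM m (A + 1) : ℝ≥0∞)) x := by
    intro s hs
    simp only [Set.indicator_apply, mem_freeCyl_succ_iff (mem_range.1 hs).ne, hx, Pi.zero_apply,
      true_and, hMM]
    split_ifs <;> ring
  rw [kernelMajorant_eq_sum_add, kernelMajorant_eq_sum_add, mul_add, mul_sum, sum_congr rfl hfree,
    sum_range_succ, add_assoc, add_assoc, freeCyl_succ_self]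
  gcongr _ + ?_
  simp only [Set.indicator_apply, mem_cyl_succ_iff, hx, Pi.zero_apply, true_and]
  split_ifs
  · rw [mul_left_comm, ← hMM]
    gcongr
  · simp

end KernelMajorant

section Kernels

theorem K_eq_inv_mul_fejerSum (n : ℕ) (x : G m) : K m n x = (n : ℂ)⁻¹ * fejerSum m n x := by
  rw [K, fejerSum, range_eq_Ico, sum_Ico_add' (fun k => D m k x)]
  rfl

theorem enorm_sum_rade_pow_le (A j : ℕ) (x : G m) :
    ‖∑ i ∈ range j, rade m A x ^ i‖ₑ ≤ j :=
  (enorm_sum_le _ _).trans (by simp [enorm_rade])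

variable [∀ n, Fact (1 < m n)]

theorem D_mul_MM_add {A j r : ℕ} (hj : j < m A) (hr : r ≤ MM m A) (x : G m) :
    D m (j * MM m A + r) x = D m (j * MM m A) x + rade m A x ^ j * D m r x := by
  rw [D, sum_range_add, D, D, mul_sum]
  congr 1
  exact sum_congr rfl fun k hk => psi_mul_MM_add hj ((mem_range.1 hk).trans_le hr) x

theorem D_mul_MM {A j : ℕ} (hj : j ≤ m A) (x : G m) :
    D m (j * MM m A) x = (∑ i ∈ range j, rade m A x ^ i) * D m (MM m A) x := by
  induction j with
  | zero => simp [D]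
  | succ j ih =>
    rw [Nat.succ_mul, D_mul_MM_add hj le_rfl, ih (by lia), sum_range_succ, add_mul]

theorem D_MM (A : ℕ) (x : G m) :
    D m (MM m A) x = (cyl m A 0).indicator (fun _ => (MM m A : ℂ)) x := by
  induction A with
  | zero => simp [D, MM, psi, cyl]
  | succ A ih =>
    rw [MM, D_mul_MM le_rfl, sum_rade_pow, ih]
    by_cases hA : x A = 0 <;> by_cases hx : x ∈ cyl m A 0 <;> simp [mem_cyl_succ_iff, hA, hx]

theorem MM_mul_enorm_D_mul_MM_le {A j : ℕ} (hj : j ≤ m A) (x : G m) :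
    MM m A * ‖D m (j * MM m A) x‖ₑ
      ≤ j * (cyl m A 0).indicator (fun _ => (MM m A * MM m A : ℝ≥0∞)) x := by
  have hD : MM m A * ‖D m (MM m A) x‖ₑ
      = (cyl m A 0).indicator (fun _ => (MM m A * MM m A : ℝ≥0∞)) x := by
    rw [D_MM]
    by_cases hx : x ∈ cyl m A 0 <;> simp [hx, enorm_eq_nnnorm]
  rw [D_mul_MM hj, enorm_mul, mul_left_comm, hD]
  gcongr
  exact enorm_sum_rade_pow_le A j x

theorem fejerSum_mul_MM_add {A j r : ℕ} (hj : j < m A) (hr : r ≤ MM m A) (x : G m) :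
    fejerSum m (j * MM m A + r) x
      = fejerSum m (j * MM m A) x + r * D m (j * MM m A) x + rade m A x ^ j * fejerSum m r x := by
  have hD : ∀ k ∈ range r, D m (j * MM m A + k + 1) x
      = D m (j * MM m A) x + rade m A x ^ j * D m (k + 1) x :=
    fun k hk => D_mul_MM_add hj ((mem_range.1 hk).trans_le hr) x
  rw [fejerSum, sum_range_add, sum_congr rfl hD, sum_add_distrib, sum_const, card_range,
    nsmul_eq_mul, ← mul_sum, ← add_assoc, fejerSum, fejerSum]

theorem fejerSum_mul_MM {A j : ℕ} (hj : j ≤ m A) (x : G m) :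
    fejerSum m (j * MM m A) x = ∑ i ∈ range j, (MM m A : ℂ) * D m (i * MM m A) x
      + (∑ i ∈ range j, rade m A x ^ i) * fejerSum m (MM m A) x := by
  induction j with
  | zero => simp [fejerSum]
  | succ j ih =>
    rw [Nat.succ_mul, fejerSum_mul_MM_add hj le_rfl, ih (by lia), sum_range_succ, sum_range_succ]
    ring

variable {B : ℕ}

theorem enorm_sum_MM_mul_D_le (hB : ∀ n, m n ≤ B) {A j : ℕ} (hj : j ≤ m A) (x : G m) :
    ‖∑ i ∈ range j, (MM m A : ℂ) * D m (i * MM m A) x‖ₑ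
      ≤ B ^ 2 * (cyl m A 0).indicator (fun _ => (MM m A * MM m A : ℝ≥0∞)) x := by
  have hjB : j ≤ B := hj.trans (hB A)
  calc ‖∑ i ∈ range j, (MM m A : ℂ) * D m (i * MM m A) x‖ₑ
      ≤ ∑ i ∈ range j, MM m A * ‖D m (i * MM m A) x‖ₑ :=
        (enorm_sum_le _ _).trans_eq (by simp [enorm_eq_nnnorm])
    _ ≤ ∑ _i ∈ range j, B * (cyl m A 0).indicator (fun _ => (MM m A * MM m A : ℝ≥0∞)) x := by
        refine sum_le_sum fun i hi => ?_
        have hij := mem_range.1 hi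
        refine (MM_mul_enorm_D_mul_MM_le (by lia) x).trans ?_
        gcongr
        lia
    _ = j * (B * (cyl m A 0).indicator (fun _ => (MM m A * MM m A : ℝ≥0∞)) x) := by simp
    _ ≤ B ^ 2 * (cyl m A 0).indicator (fun _ => (MM m A * MM m A : ℝ≥0∞)) x := by
        rw [pow_two, mul_assoc]
        gcongr

theorem one_le_bound (hB : ∀ n, m n ≤ B) : (1 : ℝ≥0∞) ≤ B := by
  exact_mod_cast (Fact.out (p := 1 < m 0)).le.trans (hB 0)

theorem enorm_fejerSum_MM_le (hB : ∀ n, m n ≤ B) (A : ℕ) (x : G m) :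
    ‖fejerSum m (MM m A) x‖ₑ ≤ B ^ 2 * kernelMajorant m A x := by
  induction A with
  | zero =>
    have hval : fejerSum m (MM m 0) x = 1 := by simp [fejerSum, MM, D, psi]
    have hmaj : kernelMajorant m 0 x = 1 := by simp [kernelMajorant, MM, freeCyl]
    rw [hval, hmaj, enorm_one, mul_one]
    exact one_le_pow₀ (one_le_bound hB)
  | succ A ih =>
    rw [MM, fejerSum_mul_MM le_rfl, sum_rade_pow]
    have hsum := enorm_sum_MM_mul_D_le hB (A := A) le_rfl x
    refine (enorm_add_le _ _).trans ((add_le_add_left hsum _).trans ?_)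
    by_cases hx : x A = 0
    · have hmA : ‖(m A : ℂ)‖ₑ = m A := by simp [enorm_eq_nnnorm]
      rw [if_pos hx, enorm_mul, hmA]
      calc _ ≤ B ^ 2 * (cyl m A 0).indicator (fun _ => (MM m A * MM m A : ℝ≥0∞)) x
            + m A * (B ^ 2 * kernelMajorant m A x) := by gcongr
        _ = B ^ 2 * (m A * kernelMajorant m A x
            + (cyl m A 0).indicator (fun _ => (MM m A * MM m A : ℝ≥0∞)) x) := by ring
        _ ≤ _ := by gcongr; exact mul_kernelMajorant_add_le_succ hx
    · rw [if_neg hx, zero_mul, enorm_zero, add_zero]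
      gcongr
      exact le_kernelMajorant_succ A x

theorem enorm_fejerSum_mul_MM_add_le (hB : ∀ n, m n ≤ B) {A j r : ℕ} (hj : j < m A)
    (hr : r ≤ MM m A) (x : G m) :
    ‖fejerSum m (j * MM m A + r) x‖ₑ ≤ ‖fejerSum m r x‖ₑ + 3 * B ^ 3 * kernelMajorant m A x := by
  have hjB : (j : ℝ≥0∞) ≤ B := by exact_mod_cast hj.le.trans (hB A)
  have hB1 := one_le_bound hB
  have hmul : ‖fejerSum m (j * MM m A) x‖ₑ
      ≤ B ^ 2 * kernelMajorant m A x + B * (B ^ 2 * kernelMajorant m A x) := by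
    rw [fejerSum_mul_MM hj.le]
    refine (enorm_add_le _ _).trans ?_
    rw [enorm_mul]
    gcongr
    · refine (enorm_sum_MM_mul_D_le hB hj.le x).trans ?_
      gcongr
      exact indicator_cyl_le_kernelMajorant A x
    · exact (enorm_sum_rade_pow_le A j x).trans hjB
    · exact enorm_fejerSum_MM_le hB A x
  have hD : ‖(r : ℂ) * D m (j * MM m A) x‖ₑ ≤ B * kernelMajorant m A x :=
    calc ‖(r : ℂ) * D m (j * MM m A) x‖ₑ ≤ MM m A * ‖D m (j * MM m A) x‖ₑ := by
          have hrM : (r : ℝ≥0∞) ≤ MM m A := by exact_mod_cast hr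
          rw [enorm_mul]
          gcongr
          simpa [enorm_eq_nnnorm] using hrM
      _ ≤ B * kernelMajorant m A x := by
          refine (MM_mul_enorm_D_mul_MM_le hj.le x).trans ?_
          gcongr
          exact indicator_cyl_le_kernelMajorant A x
  rw [fejerSum_mul_MM_add hj hr]
  calc _ ≤ ‖fejerSum m (j * MM m A) x‖ₑ + ‖(r : ℂ) * D m (j * MM m A) x‖ₑ
        + ‖rade m A x ^ j * fejerSum m r x‖ₑ :=
        (enorm_add_le _ _).trans (by gcongr; exact enorm_add_le _ _)
    _ ≤ (B ^ 2 * kernelMajorant m A x + B * (B ^ 2 * kernelMajorant m A x))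
        + B * kernelMajorant m A x + ‖fejerSum m r x‖ₑ := by
        gcongr
        simp [enorm_mul, enorm_rade]
    _ = ‖fejerSum m r x‖ₑ + (B ^ 2 + B ^ 3 + B ^ 1) * kernelMajorant m A x := by ring
    _ ≤ ‖fejerSum m r x‖ₑ + (B ^ 3 + B ^ 3 + B ^ 3) * kernelMajorant m A x := by
        gcongr _ + (?_ + _ + ?_) * _ <;> exact pow_le_pow_right₀ hB1 (by norm_num)
    _ = _ := by ring

theorem enorm_fejerSum_le (hB : ∀ n, m n ≤ B) {N n : ℕ} (hn : n < MM m N) (x : G m) :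
    ‖fejerSum m n x‖ₑ ≤ 3 * B ^ 3 * ∑ A ∈ range N, kernelMajorant m A x := by
  induction N generalizing n with
  | zero =>
    obtain rfl : n = 0 := by simpa [MM] using hn
    simp [fejerSum]
  | succ N ih =>
    have hj : n / MM m N < m N := (Nat.div_lt_iff_lt_mul (NeZero.pos _)).2 hn
    have hr : n % MM m N < MM m N := Nat.mod_lt _ (NeZero.pos _)
    rw [← Nat.div_add_mod' n (MM m N), sum_range_succ, mul_add]
    refine (enorm_fejerSum_mul_MM_add_le hB hj hr.le x).trans ?_
    gcongr
    exact ih hr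

theorem enorm_K_le (hB : ∀ n, m n ≤ B) {N n : ℕ} (hn : n < MM m N) (x : G m) :
    ‖K m n x‖ₑ ≤ (n : ℝ≥0∞)⁻¹ * (3 * B ^ 3 * ∑ A ∈ range N, kernelMajorant m A x) := by
  rcases n.eq_zero_or_pos with rfl | hpos
  · simp [K]
  rw [K_eq_inv_mul_fejerSum, enorm_mul]
  gcongr
  · rw [enorm_inv (by exact_mod_cast hpos.ne')]
    simp [enorm_eq_nnnorm]
  · exact enorm_fejerSum_le hB hn x

end Kernels

/-! ### Functions of finitely many coordinates -/

section DependsOn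

theorem filt_le (n : ℕ) : filt m n ≤ MeasurableSpace.pi :=
  Measurable.comap_le (measurable_pi_lambda _ fun i => measurable_pi_apply i.1)

variable {β : Type*} {u : G m → β}

theorem dependsOn_comp_sub {s : Set ℕ} (hu : DependsOn u s) (x : G m) :
    DependsOn (fun t => u (x - t)) s := fun t t' h =>
  hu fun i hi => by rw [Pi.sub_apply, Pi.sub_apply, h i hi]

variable [MeasurableSpace β] {n : ℕ}

theorem dependsOn_of_measurable_filt [MeasurableSingletonClass β] (hu : Measurable[filt m n] u) :
    DependsOn u (Set.Iio n) := fun _ _ h =>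
  hu.factorsThrough (funext fun i => h i i.2)

variable [∀ n, NeZero (m n)]

theorem measurable_filt_of_dependsOn (hu : DependsOn u (Set.Iio n)) : Measurable[filt m n] u := by
  intro S _
  refine ⟨(fun x (i : Fin n) => x i) '' (u ⁻¹' S), (Set.toFinite _).measurableSet, ?_⟩
  refine Set.Subset.antisymm ?_ (Set.subset_preimage_image _ _)
  rintro x ⟨y, hy, hyx⟩
  rwa [Set.mem_preimage, ← hu fun i hi => congrFun hyx ⟨i, hi⟩]

theorem measurable_of_dependsOn (hu : DependsOn u (Set.Iio n)) : Measurable u :=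
  (measurable_filt_of_dependsOn hu).mono (filt_le n) le_rfl

theorem integrable_of_dependsOn {μ : Measure (G m)} [IsFiniteMeasure μ] {u : G m → ℂ}
    (hu : DependsOn u (Set.Iio n)) : Integrable u μ := by
  obtain ⟨g, rfl⟩ := dependsOn_iff_exists_comp.1 hu
  obtain ⟨C, hC⟩ := (Set.finite_range fun w => ‖g w‖).bddAbove
  exact .of_bound (measurable_of_dependsOn hu).aestronglyMeasurable C
    (.of_forall fun x => hC ⟨_, rfl⟩)

end DependsOn

/-! ### Martingales and their Fejér means -/

section Martingale

variable {μ : Measure (G m)} {f : ℕ → G m → ℂ}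

theorem IsMartingale.dependsOn (hf : IsMartingale m μ f) (n : ℕ) :
    DependsOn (f n) (Set.Iio n) :=
  dependsOn_of_measurable_filt (hf.2.1 n)

variable [∀ n, NeZero (m n)] [IsFiniteMeasure μ]

theorem IsMartingale.condExp_succ (hf : IsMartingale m μ f) (n : ℕ) :
    μ[f (n + 1) | filt m n] =ᵐ[μ] f n :=
  (ae_eq_condExp_of_forall_setIntegral_eq (filt_le n) (hf.1 (n + 1))
    (fun _ _ _ => (hf.1 n).integrableOn) (fun s hs _ => (hf.2.2 n s hs).symm)
    (hf.2.1 n).stronglyMeasurable.aestronglyMeasurable).symm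

theorem IsMartingale.integral_mul_eq (hf : IsMartingale m μ f) {n k : ℕ} (hnk : n ≤ k)
    {u : G m → ℂ} (hu : DependsOn u (Set.Iio n)) :
    ∫ x, f k x * u x ∂μ = ∫ x, f n x * u x ∂μ := by
  induction k, hnk using Nat.le_induction with
  | base => rfl
  | succ k hnk ih =>
    have huk : DependsOn u (Set.Iio k) := hu.mono (Set.Iio_subset_Iio hnk)
    have hint : Integrable (fun x => f (k + 1) x * u x) μ :=
      integrable_of_dependsOn (n := k + 1) fun x y h => by
        rw [hf.dependsOn (k + 1) h, huk fun i hi => h i (Set.Iio_subset_Iio k.le_succ hi)]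
    have hpull := condExp_bilin_of_stronglyMeasurable_right (ContinuousLinearMap.mul ℝ ℂ)
      (measurable_filt_of_dependsOn huk).stronglyMeasurable hint (hf.1 (k + 1))
    rw [← ih, ← integral_condExp (filt_le k)]
    refine integral_congr_ae (hpull.trans ?_)
    filter_upwards [hf.condExp_succ k] with x hx
    rw [ContinuousLinearMap.mul_apply', hx]

end Martingale

section FejerMeans

variable [∀ n, Fact (1 < m n)]

theorem dependsOn_D {k L : ℕ} (hk : k ≤ MM m L) : DependsOn (D m k) (Set.Iio L) := fun _ _ h =>
  sum_congr rfl fun _ hi => dependsOn_psi ((mem_range.1 hi).trans_le hk) h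

theorem dependsOn_K {n L : ℕ} (hn : n ≤ MM m L) : DependsOn (K m n) (Set.Iio L) := fun x y h => by
  have hD : ∀ k ∈ Icc 1 n, D m k x = D m k y := fun k hk =>
    dependsOn_D ((mem_Icc.1 hk).2.trans hn) h
  rw [K, K, sum_congr rfl hD]

variable {μ : Measure (G m)} [IsFiniteMeasure μ] {f : ℕ → G m → ℂ}

theorem IsMartingale.mcoef_eq (hf : IsMartingale m μ f) {i N : ℕ} (hi : i < MM m N) :
    mcoef m μ f i = ∫ x, f N x * (starRingEnd ℂ) (psi m i x) ∂μ := by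
  have hdep : DependsOn (fun x => (starRingEnd ℂ) (psi m i x)) (Set.Iio N) := fun _ _ h =>
    congrArg _ (dependsOn_psi hi h)
  refine Tendsto.limUnder_eq (tendsto_const_nhds.congr' ?_)
  filter_upwards [eventually_ge_atTop N] with k hk using (hf.integral_mul_eq hk hdep).symm

/-- The convolution `u ∗ K_n`, that is, the `n`-th Fejér mean of the function `u`. -/
def fejerConv (m : ℕ → ℕ) (μ : Measure (G m)) (n : ℕ) (u : G m → ℂ) (x : G m) : ℂ :=
  ∫ t, u t * K m n (x - t) ∂μ

theorem integrable_mul_comp_sub {L : ℕ} {u v : G m → ℂ} (hu : DependsOn u (Set.Iio L))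
    (hv : DependsOn v (Set.Iio L)) (x : G m) : Integrable (fun t => u t * v (x - t)) μ :=
  integrable_of_dependsOn fun _ _ h => congrArg₂ _ (hu h) (dependsOn_comp_sub hv x h)

theorem IsMartingale.mS_eq_integral (hf : IsMartingale m μ f) {k N : ℕ} (hk : k ≤ MM m N)
    (x : G m) : mS m μ f k x = ∫ t, f N t * D m k (x - t) ∂μ := by
  have hlt : ∀ i ∈ range k, i < MM m N := fun i hi => (mem_range.1 hi).trans_le hk
  simp only [D, mul_sum]
  rw [integral_finsetSum _ fun i hi =>
    integrable_mul_comp_sub (hf.dependsOn N) (dependsOn_psi (hlt i hi)) x]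
  refine sum_congr rfl fun i hi => ?_
  rw [hf.mcoef_eq (hlt i hi), ← integral_mul_const]
  refine integral_congr_ae (.of_forall fun t => ?_)
  simp only [psi_sub]
  ring

theorem IsMartingale.mFej_eq_fejerConv (hf : IsMartingale m μ f) {n N : ℕ} (hn : n ≤ MM m N)
    (x : G m) : mFej m μ f n x = fejerConv m μ n (f N) x := by
  have hle : ∀ k ∈ Icc 1 n, k ≤ MM m N := fun k hk => (mem_Icc.1 hk).2.trans hn
  simp only [fejerConv, K, mul_left_comm (f N _), mul_sum (Icc 1 n) _ (f N _)]
  rw [mFej, integral_const_mul, integral_finsetSum _ fun k hk =>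
    integrable_mul_comp_sub (hf.dependsOn N) (dependsOn_D (hle k hk)) x]
  exact congrArg _ (sum_congr rfl fun k hk => hf.mS_eq_integral (hle k hk) x)

end FejerMeans

/-! ### Averages over cylinders with one free coordinate -/

/-- The measure `μ` gives every cylinder of length `n` the mass `1 / M_n`. This characterizes the
normalized Haar measure of `G_m`. -/
def IsUniform (m : ℕ → ℕ) (μ : Measure (G m)) : Prop :=
  ∀ (n : ℕ) (x : G m), μ (cyl m n x) = (MM m n : ℝ≥0∞)⁻¹

/-- The integral of `h` over `freeCyl A s x`, normalized by the mass of a cylinder of length `A`. -/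
def freeAvg (m : ℕ → ℕ) (μ : Measure (G m)) (A s : ℕ) (h : G m → ℝ≥0∞) (x : G m) : ℝ≥0∞ :=
  MM m A * ∫⁻ t in freeCyl m A s x, h t ∂μ

section FreeCylinders

theorem mem_freeCyl_comm {A s : ℕ} {x t : G m} : t ∈ freeCyl m A s x ↔ x ∈ freeCyl m A s t :=
  forall₃_congr fun _ _ _ => eq_comm

theorem sub_mem_freeCyl_zero_iff {A s : ℕ} {x t : G m} :
    x - t ∈ freeCyl m A s 0 ↔ t ∈ freeCyl m A s x :=
  forall₃_congr fun j _ _ => by rw [Pi.sub_apply, Pi.zero_apply, sub_eq_zero, eq_comm]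

theorem cyl_subset_freeCyl {A p s : ℕ} (hA : A ≤ p) {x t : G m} (ht : t ∈ freeCyl m A s x) :
    cyl m p t ⊆ freeCyl m A s x := fun _ hy j hj hjs =>
  (hy j (hj.trans_le hA)).trans (ht j hj hjs)

theorem freeCyl_eq_iUnion_cyl {A s : ℕ} (hs : s < A) (x : G m) :
    freeCyl m A s x = ⋃ c : ZMod (m s), cyl m A (Function.update x s c) := by
  ext t
  rw [Set.mem_iUnion]
  refine ⟨fun ht => ⟨t s, fun j hj => ?_⟩, fun ⟨c, hc⟩ j hj hjs => ?_⟩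
  · obtain rfl | hjs := eq_or_ne j s
    · rw [Function.update_self]
    · rw [Function.update_of_ne hjs, ht j hj hjs]
  · rw [hc j hj, Function.update_of_ne hjs]

theorem pairwise_disjoint_cyl_update {A s : ℕ} (hs : s < A) (x : G m) :
    Pairwise (Function.onFun Disjoint fun c : ZMod (m s) => cyl m A (Function.update x s c)) := by
  refine fun c d hcd => Set.disjoint_left.2 fun t htc htd => hcd ?_
  have hc := htc s hs
  have hd := htd s hs
  rw [Function.update_self] at hc hd
  rw [← hc, ← hd]

variable [∀ n, NeZero (m n)]

theorem measurableSet_setOf_mem_freeCyl (A s : ℕ) :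
    MeasurableSet {q : G m × G m | q.2 ∈ freeCyl m A s q.1} := by
  have hInter : {q : G m × G m | q.2 ∈ freeCyl m A s q.1} =
      ⋂ j, ⋂ (_ : j < A), ⋂ (_ : j ≠ s), {q : G m × G m | q.2 j = q.1 j} := by
    ext q
    simp only [freeCyl, Set.mem_ofPred_eq, Set.mem_iInter]
  rw [hInter]
  exact .iInter fun j => .iInter fun _ => .iInter fun _ =>
    measurableSet_eq_fun ((measurable_pi_apply j).comp measurable_snd)
      ((measurable_pi_apply j).comp measurable_fst)

theorem measurableSet_freeCyl (A s : ℕ) (x : G m) : MeasurableSet (freeCyl m A s x) :=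
  measurable_prodMk_left (measurableSet_setOf_mem_freeCyl A s)

theorem measurableSet_cyl (A : ℕ) (x : G m) : MeasurableSet (cyl m A x) :=
  freeCyl_eq_cyl_of_le le_rfl x ▸ measurableSet_freeCyl A A x

end FreeCylinders

section FreeAvg

theorem IsUniform.isProbabilityMeasure {μ : Measure (G m)} (hμ : IsUniform m μ) :
    IsProbabilityMeasure μ := by
  have huniv : cyl m 0 0 = Set.univ := Set.eq_univ_of_forall fun _ _ hj => absurd hj (by lia)
  exact ⟨by rw [← huniv, hμ, MM, Nat.cast_one, inv_one]⟩

variable [∀ n, Fact (1 < m n)] {μ : Measure (G m)} {A p s B : ℕ} {h : G m → ℝ≥0∞}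

theorem MM_ne_zero (n : ℕ) : (MM m n : ℝ≥0∞) ≠ 0 := Nat.cast_ne_zero.2 (NeZero.ne _)

theorem IsUniform.setLIntegral_cyl (hμ : IsUniform m μ) (hh : DependsOn h (Set.Iio A)) (x : G m) :
    ∫⁻ t in cyl m A x, h t ∂μ = h x * (MM m A : ℝ≥0∞)⁻¹ := by
  rw [setLIntegral_congr_fun (g := fun _ => h x) (measurableSet_cyl A x) fun t ht => hh ht,
    setLIntegral_const, hμ]

theorem IsUniform.freeAvg_eq_of_le (hμ : IsUniform m μ) (hAs : A ≤ s)
    (hh : DependsOn h (Set.Iio A)) (x : G m) : freeAvg m μ A s h x = h x := by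
  rw [freeAvg, freeCyl_eq_cyl_of_le hAs, hμ.setLIntegral_cyl hh, mul_left_comm,
    ENNReal.mul_inv_cancel (MM_ne_zero A) (ENNReal.natCast_ne_top _), mul_one]

theorem IsUniform.freeAvg_eq_sum (hμ : IsUniform m μ) (hs : s < A)
    (hh : DependsOn h (Set.Iio A)) (x : G m) :
    freeAvg m μ A s h x = ∑ c : ZMod (m s), h (Function.update x s c) := by
  rw [freeAvg, freeCyl_eq_iUnion_cyl hs,
    lintegral_iUnion (fun c => measurableSet_cyl A _) (pairwise_disjoint_cyl_update hs x),
    tsum_fintype, mul_sum]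
  refine sum_congr rfl fun c _ => ?_
  rw [hμ.setLIntegral_cyl hh, mul_left_comm,
    ENNReal.mul_inv_cancel (MM_ne_zero A) (ENNReal.natCast_ne_top _), mul_one]

theorem IsUniform.freeAvg_le (hμ : IsUniform m μ) (hB : ∀ n, m n ≤ B) (hpA : p ≤ A) (hps : p ≤ s)
    (hh : DependsOn h (Set.Iio p)) (x : G m) : freeAvg m μ A s h x ≤ B * h x := by
  have hhA : DependsOn h (Set.Iio A) := hh.mono (Set.Iio_subset_Iio hpA)
  rcases lt_or_ge s A with hs | hs
  · have hconst : ∀ c, h (Function.update x s c) = h x := fun c =>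
      hh fun j hj => Function.update_of_ne (hj.trans_le hps).ne _ _
    simp only [hμ.freeAvg_eq_sum hs hhA, hconst, sum_const, card_univ, ZMod.card, nsmul_eq_mul]
    gcongr
    exact hB s
  · rw [hμ.freeAvg_eq_of_le hs hhA]
    exact le_mul_of_one_le_left zero_le (one_le_bound hB)

theorem freeAvg_eq_lintegral_indicator (A s : ℕ) (h : G m → ℝ≥0∞) (x : G m) :
    freeAvg m μ A s h x = MM m A *
      ∫⁻ t, {q : G m × G m | q.2 ∈ freeCyl m A s q.1}.indicator (fun q => h q.2) (x, t) ∂μ := by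
  rw [freeAvg, ← lintegral_indicator (measurableSet_freeCyl A s x)]
  rfl

theorem measurable_indicator_mem_freeCyl (A s : ℕ) (hh : Measurable h) :
    Measurable ({q : G m × G m | q.2 ∈ freeCyl m A s q.1}.indicator fun q => h q.2) :=
  (hh.comp measurable_snd).indicator (measurableSet_setOf_mem_freeCyl A s)

theorem measurable_freeAvg [SFinite μ] (A s : ℕ) (hh : Measurable h) :
    Measurable (freeAvg m μ A s h) := by
  simp only [funext (freeAvg_eq_lintegral_indicator A s h)]
  exact (measurable_indicator_mem_freeCyl A s hh).lintegral_prod_right'.const_mul _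

theorem IsUniform.lintegral_freeAvg_le (hμ : IsUniform m μ) (hB : ∀ n, m n ≤ B) (A s : ℕ)
    (hh : Measurable h) : ∫⁻ x, freeAvg m μ A s h x ∂μ ≤ B * ∫⁻ t, h t ∂μ := by
  classical
  have := hμ.isProbabilityMeasure
  have hsymm : ∀ t x, {q : G m × G m | q.2 ∈ freeCyl m A s q.1}.indicator (fun q => h q.2) (x, t) =
      (freeCyl m A s t).indicator (fun _ => h t) x := fun t x => by
    simp only [Set.indicator_apply, Set.mem_ofPred_eq, mem_freeCyl_comm (x := x)]
  have hmass : ∀ t, MM m A * μ (freeCyl m A s t) ≤ B := fun t => by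
    simpa [freeAvg] using
      hμ.freeAvg_le (h := fun _ => 1) hB A.zero_le s.zero_le (fun _ _ _ => rfl) t
  calc ∫⁻ x, freeAvg m μ A s h x ∂μ
      = MM m A * ∫⁻ t, ∫⁻ x, (freeCyl m A s t).indicator (fun _ => h t) x ∂μ ∂μ := by
        simp only [freeAvg_eq_lintegral_indicator, ← hsymm]
        rw [lintegral_const_mul' _ _ (ENNReal.natCast_ne_top _)]
        exact congrArg _
          (lintegral_lintegral_swap (measurable_indicator_mem_freeCyl A s hh).aemeasurable)
    _ = ∫⁻ t, MM m A * μ (freeCyl m A s t) * h t ∂μ := by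
        simp only [lintegral_indicator (measurableSet_freeCyl A s _), setLIntegral_const]
        rw [← lintegral_const_mul' _ _ (ENNReal.natCast_ne_top _)]
        simp only [mul_assoc, mul_comm (h _)]
    _ ≤ B * ∫⁻ t, h t ∂μ := by
        rw [← lintegral_const_mul _ hh]
        gcongr with t
        exact hmass t

theorem IsUniform.rpow_setLIntegral_le (hμ : IsUniform m μ) (hh : DependsOn h (Set.Iio p))
    {S : Set (G m)} (hS : MeasurableSet S) (hcyl : ∀ t ∈ S, cyl m p t ⊆ S) {r : ℝ} (hr₀ : 0 < r)
    (hr₁ : r ≤ 1) :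
    (∫⁻ t in S, h t ∂μ) ^ r ≤ (MM m p : ℝ≥0∞) ^ (1 - r) * ∫⁻ t in S, h t ^ r ∂μ := by
  have hg : DependsOn (fun t => h t ^ r) (Set.Iio p) := fun _ _ hxy => congrArg (· ^ r) (hh hxy)
  set I := ∫⁻ t in S, h t ^ r ∂μ
  have hpoint : ∀ t ∈ S, h t ^ r ≤ MM m p * I := fun t ht => by
    rw [← ENNReal.inv_mul_le_iff (MM_ne_zero p) (ENNReal.natCast_ne_top _), mul_comm,
      ← hμ.setLIntegral_cyl hg]
    exact lintegral_mono_set (hcyl t ht)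
  have hexp : 0 ≤ r⁻¹ - 1 := sub_nonneg.2 ((one_le_inv₀ hr₀).2 hr₁)
  have hbound : ∫⁻ t in S, h t ∂μ ≤ (MM m p * I) ^ (r⁻¹ - 1) * I := by
    rw [← lintegral_const_mul _ (measurable_of_dependsOn hg)]
    refine setLIntegral_mono' hS fun t ht => ?_
    calc h t = (h t ^ r) ^ (r⁻¹ - 1) * (h t ^ r) ^ (1 : ℝ) := by
          rw [← ENNReal.rpow_add_of_nonneg _ _ hexp zero_le_one, sub_add_cancel,
            ENNReal.rpow_rpow_inv hr₀.ne']
      _ ≤ (MM m p * I) ^ (r⁻¹ - 1) * h t ^ r := by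
          rw [ENNReal.rpow_one]
          gcongr
          exact hpoint t ht
  calc (∫⁻ t in S, h t ∂μ) ^ r ≤ ((MM m p * I) ^ (r⁻¹ - 1) * I) ^ r := by gcongr
    _ = (MM m p : ℝ≥0∞) ^ (1 - r) * (I ^ (1 - r) * I ^ r) := by
        rw [ENNReal.mul_rpow_of_nonneg _ _ hr₀.le, ← ENNReal.rpow_mul, sub_mul,
          inv_mul_cancel₀ hr₀.ne', one_mul, ENNReal.mul_rpow_of_nonneg _ _ (sub_nonneg.2 hr₁),
          mul_assoc]
    _ = (MM m p : ℝ≥0∞) ^ (1 - r) * I := by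
        rw [← ENNReal.rpow_add_of_nonneg _ _ (sub_nonneg.2 hr₁) hr₀.le, sub_add_cancel,
          ENNReal.rpow_one]

end FreeAvg

/-! ### Convolution with the Fejér kernels -/

/-- The convolution of `h` with `kernelMajorant m A`, see `lintegral_mul_kernelMajorant`. -/
def convMajorant (m : ℕ → ℕ) (μ : Measure (G m)) (A : ℕ) (h : G m → ℝ≥0∞) (x : G m) : ℝ≥0∞ :=
  ∑ s ∈ range (A + 1), MM m s * freeAvg m μ A s h x

/-- The function `∑_{A ≤ p} convMajorant A h`, which dominates `M_p sup_{n ≥ M_p} |u ∗ K_n|` up to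
a constant whenever `|u| ≤ h` and `h` is a function of the first `p` coordinates. -/
def convMajorantSum (m : ℕ → ℕ) (μ : Measure (G m)) (p : ℕ) (h : G m → ℝ≥0∞) (x : G m) : ℝ≥0∞ :=
  ∑ A ∈ range (p + 1), convMajorant m μ A h x

section Geometric

theorem rpow_sum_le_sum_rpow {ι : Type*} (s : Finset ι) (a : ι → ℝ≥0∞) {r : ℝ} (hr₀ : 0 < r)
    (hr₁ : r ≤ 1) : (∑ i ∈ s, a i) ^ r ≤ ∑ i ∈ s, a i ^ r :=
  le_sum_of_subadditive (· ^ r) (ENNReal.zero_rpow_of_pos hr₀).le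
    (fun x y => ENNReal.rpow_add_le_add_rpow x y hr₀.le hr₁) s a

variable [∀ n, Fact (1 < m n)]

theorem two_mul_MM_le_succ (A : ℕ) : 2 * MM m A ≤ MM m (A + 1) :=
  Nat.mul_le_mul_right _ (Fact.out (p := 1 < m A))

theorem sum_MM_le (A : ℕ) : ∑ s ∈ range (A + 1), (MM m s : ℝ≥0∞) ≤ 2 * MM m A := by
  have hnat : ∑ s ∈ range (A + 1), MM m s ≤ 2 * MM m A := by
    induction A with
    | zero => simp [MM]
    | succ A ih =>
      rw [sum_range_succ]
      linarith [two_mul_MM_le_succ (m := m) A]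
  exact_mod_cast hnat

theorem sum_sqrt_MM_le (A : ℕ) :
    ∑ s ∈ range (A + 1), (MM m s : ℝ≥0∞) ^ (1 / 2 : ℝ) ≤ 4 * (MM m A : ℝ≥0∞) ^ (1 / 2 : ℝ) := by
  induction A with
  | zero => simp [MM]
  | succ A ih =>
    have htwo : (16 * MM m A : ℝ≥0∞) ≤ 9 * MM m (A + 1) := by
      exact_mod_cast (by linarith [two_mul_MM_le_succ (m := m) A] : 16 * MM m A ≤ 9 * MM m (A + 1))
    have hstep : 4 * (MM m A : ℝ≥0∞) ^ (1 / 2 : ℝ) ≤ 3 * (MM m (A + 1) : ℝ≥0∞) ^ (1 / 2 : ℝ) := by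
      rw [← ENNReal.rpow_le_rpow_iff (z := 2) two_pos, ENNReal.mul_rpow_of_nonneg _ _ zero_le_two,
        ENNReal.mul_rpow_of_nonneg _ _ zero_le_two, ← ENNReal.rpow_mul, ← ENNReal.rpow_mul]
      norm_num [htwo]
    calc ∑ s ∈ range (A + 1 + 1), (MM m s : ℝ≥0∞) ^ (1 / 2 : ℝ)
        ≤ 3 * (MM m (A + 1) : ℝ≥0∞) ^ (1 / 2 : ℝ) + (MM m (A + 1) : ℝ≥0∞) ^ (1 / 2 : ℝ) := by
          rw [sum_range_succ]
          gcongr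
          exact ih.trans hstep
      _ = 4 * (MM m (A + 1) : ℝ≥0∞) ^ (1 / 2 : ℝ) := by ring

theorem exists_MM_le_and_lt_MM_succ {n : ℕ} (hn : n ≠ 0) : ∃ q, MM m q ≤ n ∧ n < MM m (q + 1) := by
  have hex : ∃ q, n < MM m q := ⟨n, lt_MM n⟩
  obtain ⟨q, hq⟩ := Nat.exists_eq_succ_of_ne_zero ((Nat.find_pos hex).2 (by rw [MM]; lia)).ne'
  refine ⟨q, not_lt.1 (Nat.find_min hex (by lia)), ?_⟩
  rw [← Nat.succ_eq_add_one, ← hq]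
  exact Nat.find_spec hex

end Geometric

section Majorant

variable [∀ n, Fact (1 < m n)] {μ : Measure (G m)} {A p q B : ℕ} {h : G m → ℝ≥0∞}

theorem lintegral_mul_kernelMajorant (A : ℕ) (hh : Measurable h) (x : G m) :
    ∫⁻ t, h t * kernelMajorant m A (x - t) ∂μ = convMajorant m μ A h x := by
  classical
  have hind : ∀ t, h t * kernelMajorant m A (x - t) = ∑ s ∈ range (A + 1),
      MM m s * (MM m A * (freeCyl m A s x).indicator h t) := fun t => by
    simp only [kernelMajorant, mul_sum, Set.indicator_apply, sub_mem_freeCyl_zero_iff]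
    refine sum_congr rfl fun s _ => ?_
    split_ifs <;> ring
  have hmeas : ∀ s, Measurable fun t => MM m A * (freeCyl m A s x).indicator h t := fun s =>
    (hh.indicator (measurableSet_freeCyl A s x)).const_mul _
  simp only [hind]
  rw [lintegral_finsetSum _ fun s _ => (hmeas s).const_mul _]
  refine sum_congr rfl fun s _ => ?_
  rw [lintegral_const_mul _ (hmeas s), lintegral_const_mul' _ _ (ENNReal.natCast_ne_top _),
    lintegral_indicator (measurableSet_freeCyl A s x), freeAvg]

theorem IsUniform.MM_mul_le_convMajorant (hμ : IsUniform m μ) (hh : DependsOn h (Set.Iio p))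
    (x : G m) : MM m p * h x ≤ convMajorant m μ p h x := by
  rw [convMajorant, sum_range_succ, hμ.freeAvg_eq_of_le le_rfl hh]
  exact le_add_self

theorem IsUniform.convMajorant_le_add (hμ : IsUniform m μ) (hB : ∀ n, m n ≤ B) (hpA : p ≤ A)
    (hh : DependsOn h (Set.Iio p)) (x : G m) :
    convMajorant m μ A h x ≤ convMajorant m μ p h x + 2 * B * (MM m A * h x) := by
  have hhA : DependsOn h (Set.Iio A) := hh.mono (Set.Iio_subset_Iio hpA)
  have hlow : ∀ s ∈ range p, MM m s * freeAvg m μ A s h x = MM m s * freeAvg m μ p s h x :=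
    fun s hs => by
      have hsp := mem_range.1 hs
      rw [hμ.freeAvg_eq_sum hsp hh, hμ.freeAvg_eq_sum (hsp.trans_le hpA) hhA]
  have hhigh : ∀ s ∈ Ico p (A + 1), MM m s * freeAvg m μ A s h x ≤ MM m s * (B * h x) :=
    fun s hs => mul_le_mul_right (hμ.freeAvg_le hB hpA (mem_Ico.1 hs).1 hh x) _
  calc convMajorant m μ A h x
      = ∑ s ∈ range p, MM m s * freeAvg m μ p s h x +
          ∑ s ∈ Ico p (A + 1), MM m s * freeAvg m μ A s h x := by
        rw [convMajorant, ← sum_range_add_sum_Ico _ (hpA.trans A.le_succ), sum_congr rfl hlow]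
    _ ≤ convMajorant m μ p h x + ∑ s ∈ range (A + 1), (MM m s : ℝ≥0∞) * (B * h x) := by
        gcongr ?_ + ?_
        · exact sum_le_sum_of_subset (range_mono p.le_succ)
        · exact (sum_le_sum hhigh).trans
            (sum_le_sum_of_subset fun s hs => mem_range.2 (mem_Ico.1 hs).2)
    _ ≤ convMajorant m μ p h x + 2 * MM m A * (B * h x) := by
        rw [← sum_mul]
        gcongr
        exact sum_MM_le A
    _ = convMajorant m μ p h x + 2 * B * (MM m A * h x) := by ring

theorem IsUniform.MM_mul_convMajorant_le (hμ : IsUniform m μ) (hB : ∀ n, m n ≤ B) (hpA : p ≤ A)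
    (hh : DependsOn h (Set.Iio p)) (x : G m) :
    MM m p * convMajorant m μ A h x ≤ (1 + 2 * B) * (MM m A * convMajorant m μ p h x) :=
  calc MM m p * convMajorant m μ A h x
      ≤ MM m p * (convMajorant m μ p h x + 2 * B * (MM m A * h x)) := by
        gcongr
        exact hμ.convMajorant_le_add hB hpA hh x
    _ = MM m p * convMajorant m μ p h x + 2 * B * (MM m A * (MM m p * h x)) := by ring
    _ ≤ MM m A * convMajorant m μ p h x + 2 * B * (MM m A * convMajorant m μ p h x) := by
        gcongr
        · exact MM_mono hpA
        · exact hμ.MM_mul_le_convMajorant hh x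
    _ = (1 + 2 * B) * (MM m A * convMajorant m μ p h x) := by ring

theorem IsUniform.MM_mul_sum_convMajorant_le (hμ : IsUniform m μ) (hB : ∀ n, m n ≤ B)
    (hpq : p ≤ q) (hh : DependsOn h (Set.Iio p)) (x : G m) :
    MM m p * ∑ A ∈ range (q + 1), convMajorant m μ A h x ≤
      2 * (1 + 2 * B) * (MM m q * convMajorantSum m μ p h x) := by
  have hlast : convMajorant m μ p h x ≤ convMajorantSum m μ p h x := by
    rw [convMajorantSum, sum_range_succ]
    exact le_add_self
  induction q, hpq using Nat.le_induction with
  | base => exact le_mul_of_one_le_left zero_le (mod_cast (by lia : 1 ≤ 2 * (1 + 2 * B)))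
  | succ q hpq ih =>
    have htwo : (2 * MM m q : ℝ≥0∞) ≤ MM m (q + 1) := mod_cast two_mul_MM_le_succ q
    rw [sum_range_succ, mul_add]
    calc _ ≤ 2 * (1 + 2 * B) * (MM m q * convMajorantSum m μ p h x) +
            (1 + 2 * B) * (MM m (q + 1) * convMajorant m μ p h x) :=
          add_le_add ih (hμ.MM_mul_convMajorant_le hB (hpq.trans q.le_succ) hh x)
      _ = (1 + 2 * B) * ((2 * MM m q) * convMajorantSum m μ p h x) +
            (1 + 2 * B) * (MM m (q + 1) * convMajorant m μ p h x) := by ring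
      _ ≤ (1 + 2 * B) * (MM m (q + 1) * convMajorantSum m μ p h x) +
            (1 + 2 * B) * (MM m (q + 1) * convMajorantSum m μ p h x) := by gcongr
      _ = _ := by ring

theorem measurable_kernelMajorant (A : ℕ) : Measurable (kernelMajorant m A) :=
  Finset.measurable_sum _ fun s _ => measurable_const.indicator (measurableSet_freeCyl A s 0)

theorem enorm_fejerConv_le (hB : ∀ n, m n ≤ B) {n N : ℕ} (hn : n < MM m N) (hh : Measurable h)
    {u : G m → ℂ} (hu : ∀ t, ‖u t‖ₑ ≤ h t) (x : G m) :
    ‖fejerConv m μ n u x‖ₑ ≤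
      (n : ℝ≥0∞)⁻¹ * (3 * B ^ 3 * ∑ A ∈ range N, convMajorant m μ A h x) := by
  have hmeas : ∀ A, Measurable fun t => h t * kernelMajorant m A (x - t) := fun A =>
    hh.mul ((measurable_kernelMajorant A).comp (measurable_const_sub x))
  calc ‖fejerConv m μ n u x‖ₑ ≤ ∫⁻ t, ‖u t * K m n (x - t)‖ₑ ∂μ :=
        enorm_integral_le_lintegral_enorm _
    _ ≤ ∫⁻ t, (n : ℝ≥0∞)⁻¹ * (3 * B ^ 3) *
          ∑ A ∈ range N, h t * kernelMajorant m A (x - t) ∂μ := by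
        gcongr with t
        rw [enorm_mul, ← mul_sum, mul_left_comm, mul_assoc]
        exact mul_le_mul' (hu t) (enorm_K_le hB hn _)
    _ = _ := by
        rw [lintegral_const_mul _ (Finset.measurable_sum _ fun A _ => hmeas A),
          lintegral_finsetSum _ fun A _ => hmeas A, mul_assoc]
        simp only [lintegral_mul_kernelMajorant _ hh]

theorem IsUniform.enorm_fejerConv_le_convMajorantSum (hμ : IsUniform m μ) (hB : ∀ n, m n ≤ B)
    {n : ℕ} (hn : MM m p ≤ n) (hh : DependsOn h (Set.Iio p)) {u : G m → ℂ}
    (hu : ∀ t, ‖u t‖ₑ ≤ h t) (x : G m) :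
    ‖fejerConv m μ n u x‖ₑ ≤
      6 * B ^ 3 * (1 + 2 * B) * ((MM m p : ℝ≥0∞)⁻¹ * convMajorantSum m μ p h x) := by
  have hn₀ : n ≠ 0 := ((NeZero.pos _).trans_le hn).ne'
  obtain ⟨q, hqn, hnq⟩ := exists_MM_le_and_lt_MM_succ (m := m) hn₀
  have hpq : p ≤ q := Nat.lt_succ_iff.1 (MM_mono.reflect_lt (hn.trans_lt hnq))
  have hsum : ∑ A ∈ range (q + 1), convMajorant m μ A h x ≤
      (MM m p : ℝ≥0∞)⁻¹ * (2 * (1 + 2 * B) * (n * convMajorantSum m μ p h x)) := by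
    rw [mul_comm, ← div_eq_mul_inv, ENNReal.le_div_iff_mul_le (.inl (MM_ne_zero p))
      (.inl (ENNReal.natCast_ne_top _)), mul_comm]
    refine (hμ.MM_mul_sum_convMajorant_le hB hpq hh x).trans ?_
    gcongr
  calc ‖fejerConv m μ n u x‖ₑ
      ≤ (n : ℝ≥0∞)⁻¹ * (3 * B ^ 3 * ∑ A ∈ range (q + 1), convMajorant m μ A h x) :=
        enorm_fejerConv_le hB hnq (measurable_of_dependsOn hh) hu x
    _ ≤ (n : ℝ≥0∞)⁻¹ * (3 * B ^ 3 *
          ((MM m p : ℝ≥0∞)⁻¹ * (2 * (1 + 2 * B) * (n * convMajorantSum m μ p h x)))) := by gcongr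
    _ = ((n : ℝ≥0∞)⁻¹ * n) *
          (6 * B ^ 3 * (1 + 2 * B) * ((MM m p : ℝ≥0∞)⁻¹ * convMajorantSum m μ p h x)) := by ring
    _ = _ := by
        rw [ENNReal.inv_mul_cancel (Nat.cast_ne_zero.2 hn₀) (ENNReal.natCast_ne_top _), one_mul]

theorem IsUniform.lintegral_sqrt_freeAvg_le (hμ : IsUniform m μ) (hB : ∀ n, m n ≤ B) (s : ℕ)
    (hAp : A ≤ p) (hh : DependsOn h (Set.Iio p)) :
    (MM m A : ℝ≥0∞) ^ (1 / 2 : ℝ) * ∫⁻ x, freeAvg m μ A s h x ^ (1 / 2 : ℝ) ∂μ ≤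
      B * (MM m p : ℝ≥0∞) ^ (1 / 2 : ℝ) * ∫⁻ x, h x ^ (1 / 2 : ℝ) ∂μ := by
  have hg : Measurable fun t => h t ^ (1 / 2 : ℝ) := (measurable_of_dependsOn hh).pow_const _
  have hpoint : ∀ x, (MM m A : ℝ≥0∞) ^ (1 / 2 : ℝ) * freeAvg m μ A s h x ^ (1 / 2 : ℝ) ≤
      (MM m p : ℝ≥0∞) ^ (1 / 2 : ℝ) * freeAvg m μ A s (fun t => h t ^ (1 / 2 : ℝ)) x := fun x => by
    have hsqrt := hμ.rpow_setLIntegral_le hh (measurableSet_freeCyl A s x)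
      (fun t ht => cyl_subset_freeCyl hAp ht) (r := 1 / 2) (by norm_num) (by norm_num)
    have hhalf : (MM m A : ℝ≥0∞) ^ (1 / 2 : ℝ) * (MM m A : ℝ≥0∞) ^ (1 / 2 : ℝ) = MM m A := by
      rw [← ENNReal.rpow_add_of_nonneg _ _ (by norm_num) (by norm_num), add_halves,
        ENNReal.rpow_one]
    rw [freeAvg, freeAvg, ENNReal.mul_rpow_of_nonneg _ _ (by norm_num), ← mul_assoc, hhalf,
      mul_left_comm]
    rw [sub_half] at hsqrt
    gcongr
  rw [← lintegral_const_mul' _ _ (by finiteness)]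
  refine (lintegral_mono hpoint).trans ?_
  rw [lintegral_const_mul' _ _ (by finiteness), mul_comm (B : ℝ≥0∞), mul_assoc]
  gcongr
  exact hμ.lintegral_freeAvg_le hB A s hg

theorem IsUniform.lintegral_sqrt_convMajorant_le (hμ : IsUniform m μ) (hB : ∀ n, m n ≤ B)
    (hAp : A ≤ p) (hh : DependsOn h (Set.Iio p)) :
    ∫⁻ x, convMajorant m μ A h x ^ (1 / 2 : ℝ) ∂μ ≤
      4 * B * (MM m p : ℝ≥0∞) ^ (1 / 2 : ℝ) * ∫⁻ x, h x ^ (1 / 2 : ℝ) ∂μ := by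
  have := hμ.isProbabilityMeasure
  have hmeas := measurable_of_dependsOn hh
  have hsqrt₀ : (MM m A : ℝ≥0∞) ^ (1 / 2 : ℝ) ≠ 0 :=
    (ENNReal.rpow_pos (pos_iff_ne_zero.2 (MM_ne_zero A)) (ENNReal.natCast_ne_top _)).ne'
  have hsum : ∫⁻ x, convMajorant m μ A h x ^ (1 / 2 : ℝ) ∂μ ≤ ∑ s ∈ range (A + 1),
      (MM m s : ℝ≥0∞) ^ (1 / 2 : ℝ) * ∫⁻ x, freeAvg m μ A s h x ^ (1 / 2 : ℝ) ∂μ := by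
    refine (lintegral_mono fun x =>
      rpow_sum_le_sum_rpow _ _ one_half_pos one_half_lt_one.le).trans_eq ?_
    simp only [ENNReal.mul_rpow_of_nonneg _ _ one_half_pos.le]
    rw [lintegral_finsetSum _ fun s _ => ((measurable_freeAvg A s hmeas).pow_const _).const_mul _]
    exact sum_congr rfl fun s _ => lintegral_const_mul' _ _ (by finiteness)
  rw [← ENNReal.mul_le_mul_iff_right hsqrt₀ (by finiteness)]
  calc (MM m A : ℝ≥0∞) ^ (1 / 2 : ℝ) * ∫⁻ x, convMajorant m μ A h x ^ (1 / 2 : ℝ) ∂μ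
      ≤ ∑ s ∈ range (A + 1), (MM m s : ℝ≥0∞) ^ (1 / 2 : ℝ) *
          ((MM m A : ℝ≥0∞) ^ (1 / 2 : ℝ) * ∫⁻ x, freeAvg m μ A s h x ^ (1 / 2 : ℝ) ∂μ) := by
        refine (mul_le_mul_right hsum _).trans_eq ?_
        rw [mul_sum]
        exact sum_congr rfl fun s _ => mul_left_comm _ _ _
    _ ≤ ∑ s ∈ range (A + 1), (MM m s : ℝ≥0∞) ^ (1 / 2 : ℝ) *
          (B * (MM m p : ℝ≥0∞) ^ (1 / 2 : ℝ) * ∫⁻ x, h x ^ (1 / 2 : ℝ) ∂μ) :=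
        sum_le_sum fun s _ => mul_le_mul_right (hμ.lintegral_sqrt_freeAvg_le hB s hAp hh) _
    _ ≤ 4 * (MM m A : ℝ≥0∞) ^ (1 / 2 : ℝ) *
          (B * (MM m p : ℝ≥0∞) ^ (1 / 2 : ℝ) * ∫⁻ x, h x ^ (1 / 2 : ℝ) ∂μ) := by
        rw [← sum_mul]
        gcongr
        exact sum_sqrt_MM_le A
    _ = _ := by ring

theorem measurable_convMajorant [SFinite μ] (A : ℕ) (hh : Measurable h) :
    Measurable (convMajorant m μ A h) :=
  Finset.measurable_sum _ fun s _ => (measurable_freeAvg A s hh).const_mul _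

theorem measurable_convMajorantSum [SFinite μ] (p : ℕ) (hh : Measurable h) :
    Measurable (convMajorantSum m μ p h) :=
  Finset.measurable_sum _ fun A _ => measurable_convMajorant A hh

theorem IsUniform.lintegral_sqrt_convMajorantSum_le (hμ : IsUniform m μ) (hB : ∀ n, m n ≤ B)
    (hh : DependsOn h (Set.Iio p)) :
    ∫⁻ x, convMajorantSum m μ p h x ^ (1 / 2 : ℝ) ∂μ ≤
      4 * B * ((p + 1) * (MM m p : ℝ≥0∞) ^ (1 / 2 : ℝ)) * ∫⁻ x, h x ^ (1 / 2 : ℝ) ∂μ := by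
  have := hμ.isProbabilityMeasure
  calc ∫⁻ x, convMajorantSum m μ p h x ^ (1 / 2 : ℝ) ∂μ
      ≤ ∫⁻ x, ∑ A ∈ range (p + 1), convMajorant m μ A h x ^ (1 / 2 : ℝ) ∂μ :=
        lintegral_mono fun x => rpow_sum_le_sum_rpow _ _ (by norm_num) (by norm_num)
    _ = ∑ A ∈ range (p + 1), ∫⁻ x, convMajorant m μ A h x ^ (1 / 2 : ℝ) ∂μ :=
        lintegral_finsetSum _ fun A _ =>
          (measurable_convMajorant A (measurable_of_dependsOn hh)).pow_const _
    _ ≤ ∑ A ∈ range (p + 1),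
          4 * B * (MM m p : ℝ≥0∞) ^ (1 / 2 : ℝ) * ∫⁻ x, h x ^ (1 / 2 : ℝ) ∂μ :=
        sum_le_sum fun A hA =>
          hμ.lintegral_sqrt_convMajorant_le hB (Nat.lt_succ_iff.1 (mem_range.1 hA)) hh
    _ = _ := by
        rw [sum_const, card_range, nsmul_eq_mul]
        push_cast
        ring

end Majorant

/-! ### The atomic decomposition of a martingale -/

/-- The largest modulus of `f (n + 1)` on the interval `I_n(x)`. -/
def childSup (m : ℕ → ℕ) (f : ℕ → G m → ℂ) (n : ℕ) (x : G m) : ℝ≥0∞ :=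
  ⨆ c : ZMod (m n), ‖f (n + 1) (Function.update x n c)‖ₑ

open Classical in
/-- The last stopping time not exceeding `n`: level `0` is a stopping time, and a later level is one
as soon as `childSup` has grown by more than a factor `4` since the previous stopping time. -/
def lastStop (m : ℕ → ℕ) (f : ℕ → G m → ℂ) : ℕ → G m → ℕ
  | 0, _ => 0
  | n + 1, x =>
    if 4 * childSup m f (lastStop m f n x) x < childSup m f (n + 1) x then n + 1
    else lastStop m f n x

/-- The part of the martingale difference `f N - f 0` that is collected between a stopping time at
level `p` and the next stopping time. On each interval of level `p` where the martingale stops it is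
a multiple of an atom. -/
def atomSum (m : ℕ → ℕ) (f : ℕ → G m → ℂ) (N p : ℕ) (x : G m) : ℂ :=
  ∑ k ∈ range N, if lastStop m f k x = p then f (k + 1) x - f k x else 0

/-- The bound for `atomSum m f N p` that depends only on the first `p` coordinates, see
`enorm_atomSum_le`. -/
def atomHeight (m : ℕ → ℕ) (f : ℕ → G m → ℂ) (p : ℕ) (x : G m) : ℝ≥0∞ :=
  if lastStop m f p x = p then 9 * childSup m f p x else 0

open Classical in
/-- The square root of `childSup m f p`, restricted to the points where the martingale stops at
level `p` and `f (p + 1)` attains that supremum. -/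
def peakSqrt (m : ℕ → ℕ) (f : ℕ → G m → ℂ) (p : ℕ) (x : G m) : ℝ≥0∞ :=
  if lastStop m f p x = p ∧ ‖f (p + 1) x‖ₑ = childSup m f p x then
    childSup m f p x ^ (1 / 2 : ℝ) else 0

section Stopping

variable {f : ℕ → G m → ℂ}

theorem enorm_succ_le_childSup (n : ℕ) (x : G m) : ‖f (n + 1) x‖ₑ ≤ childSup m f n x :=
  le_iSup_of_le (x n) (by rw [Function.update_eq_self])

theorem lastStop_le (n : ℕ) (x : G m) : lastStop m f n x ≤ n := by
  induction n with
  | zero => exact le_rfl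
  | succ n ih =>
    rw [lastStop]
    split_ifs
    exacts [le_rfl, ih.trans n.le_succ]

theorem lastStop_succ_eq_or (n : ℕ) (x : G m) :
    lastStop m f (n + 1) x = n + 1 ∨ lastStop m f (n + 1) x = lastStop m f n x := by
  rw [lastStop]
  exact ite_eq_or_eq _ _ _

theorem lastStop_lastStop (n : ℕ) (x : G m) :
    lastStop m f (lastStop m f n x) x = lastStop m f n x := by
  induction n with
  | zero => rfl
  | succ n ih =>
    rcases lastStop_succ_eq_or (f := f) n x with h | h
    · rw [h, h]
    · rw [h, ih]

theorem childSup_le (n : ℕ) (x : G m) :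
    childSup m f n x ≤ 4 * childSup m f (lastStop m f n x) x := by
  have hfour : ∀ a : ℝ≥0∞, a ≤ 4 * a := fun a => le_mul_of_one_le_left zero_le (by norm_num)
  cases n with
  | zero => exact hfour _
  | succ n =>
    rw [lastStop]
    split_ifs with h
    exacts [hfour _, not_lt.1 h]

theorem eq_add_sum_atomSum (N : ℕ) (x : G m) :
    f N x = f 0 x + ∑ p ∈ range N, atomSum m f N p x := by
  have hsingle : ∀ k ∈ range N,
      (∑ p ∈ range N, if lastStop m f k x = p then f (k + 1) x - f k x else 0) =
        f (k + 1) x - f k x := fun k hk => by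
    rw [sum_ite_eq, if_pos (mem_range.2 ((lastStop_le k x).trans_lt (mem_range.1 hk)))]
  simp only [atomSum]
  rw [sum_comm, sum_congr rfl hsingle, sum_range_sub (f · x), add_sub_cancel]

theorem atomSum_eq_zero {N p : ℕ} {x : G m} (h : ∀ k < N, lastStop m f k x ≠ p) :
    atomSum m f N p x = 0 :=
  sum_eq_zero fun k hk => if_neg (h k (mem_range.1 hk))

theorem atomSum_eq_zero_of_le {N p : ℕ} (hN : N ≤ p) (x : G m) : atomSum m f N p x = 0 :=
  atomSum_eq_zero fun k hk => ((lastStop_le k x).trans_lt (hk.trans_le hN)).ne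

theorem exists_atomSum_eq_sub {p N : ℕ} {x : G m} (hle : ‖f p x‖ₑ ≤ childSup m f p x)
    (hpN : p ≤ N) :
    ∃ k, (lastStop m f N x = p → k = N) ∧ atomSum m f N p x = f k x - f p x ∧
      ‖f k x‖ₑ ≤ 4 * childSup m f p x := by
  induction N, hpN using Nat.le_induction with
  | base =>
    refine ⟨p, fun _ => rfl, by rw [atomSum_eq_zero_of_le le_rfl, sub_self], hle.trans ?_⟩
    exact le_mul_of_one_le_left zero_le (by norm_num)
  | succ N hpN ih =>
    obtain ⟨k, hkN, hk, hbound⟩ := ih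
    have hsucc : atomSum m f (N + 1) p x =
        atomSum m f N p x + if lastStop m f N x = p then f (N + 1) x - f N x else 0 :=
      sum_range_succ _ _
    by_cases hN : lastStop m f N x = p
    · refine ⟨N + 1, fun _ => rfl, ?_, (enorm_succ_le_childSup N x).trans (hN ▸ childSup_le N x)⟩
      rw [hsucc, hk, hkN hN, if_pos hN]
      ring
    · refine ⟨k, fun h => ?_, by rw [hsucc, if_neg hN, add_zero, hk], hbound⟩
      rcases lastStop_succ_eq_or (f := f) N x with h' | h'
      · lia
      · exact absurd (h' ▸ h) hN

theorem enorm_atomSum_le {p : ℕ} {x : G m} (hle : ‖f p x‖ₑ ≤ childSup m f p x) (N : ℕ) :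
    ‖atomSum m f N p x‖ₑ ≤ atomHeight m f p x := by
  rw [atomHeight]
  split_ifs with hp
  · rcases le_total N p with hN | hN
    · simp [atomSum_eq_zero_of_le hN]
    · obtain ⟨k, -, hk, hbound⟩ := exists_atomSum_eq_sub hle hN
      calc ‖atomSum m f N p x‖ₑ ≤ ‖f k x‖ₑ + ‖f p x‖ₑ := hk ▸ enorm_sub_le
        _ ≤ 4 * childSup m f p x + childSup m f p x := add_le_add hbound hle
        _ = 5 * childSup m f p x := by ring
        _ ≤ 9 * childSup m f p x := by gcongr; norm_num
  · have hne : ∀ k < N, lastStop m f k x ≠ p := fun k _ hk => hp (hk ▸ lastStop_lastStop k x)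
    rw [atomSum_eq_zero hne, enorm_zero]

/-- The values of `childSup` at the successive stopping times grow at least geometrically, so their
square roots are dominated by the last one. -/
theorem sum_sqrt_childSup_le (n : ℕ) (x : G m) :
    (∑ p ∈ range (n + 1), if lastStop m f p x = p then childSup m f p x ^ (1 / 2 : ℝ) else 0) ≤
      2 * childSup m f (lastStop m f n x) x ^ (1 / 2 : ℝ) := by
  induction n with
  | zero => simpa [lastStop] using le_mul_of_one_le_left zero_le one_le_two
  | succ n ih =>
    rw [sum_range_succ]
    by_cases h : 4 * childSup m f (lastStop m f n x) x < childSup m f (n + 1) x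
    · have hlastStop : lastStop m f (n + 1) x = n + 1 := by rw [lastStop, if_pos h]
      have hfour : (4 : ℝ≥0∞) ^ (1 / 2 : ℝ) = 2 := by
        rw [show (4 : ℝ≥0∞) = 2 ^ (2 : ℝ) by norm_num, ← ENNReal.rpow_mul]
        norm_num
      rw [hlastStop, if_pos rfl, two_mul]
      gcongr
      refine ih.trans ?_
      rw [← hfour, ← ENNReal.mul_rpow_of_nonneg _ _ one_half_pos.le]
      gcongr
    · have hlastStop : lastStop m f (n + 1) x = lastStop m f n x := by rw [lastStop, if_neg h]
      rwa [hlastStop, if_neg ((lastStop_le n x).trans_lt n.lt_succ_self).ne, add_zero]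

theorem sum_peakSqrt_le (n : ℕ) (x : G m) :
    ∑ p ∈ range n, peakSqrt m f p x ≤ 2 * (⨆ k, ‖f k x‖ₑ) ^ (1 / 2 : ℝ) := by
  induction n with
  | zero => simp
  | succ n ih =>
    by_cases h : lastStop m f n x = n ∧ ‖f (n + 1) x‖ₑ = childSup m f n x
    · have hle : ∀ p, peakSqrt m f p x ≤
          if lastStop m f p x = p then childSup m f p x ^ (1 / 2 : ℝ) else 0 := fun p => by
        rw [peakSqrt, ite_and]
        split_ifs <;> simp
      calc ∑ p ∈ range (n + 1), peakSqrt m f p x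
          ≤ 2 * childSup m f (lastStop m f n x) x ^ (1 / 2 : ℝ) :=
            (sum_le_sum fun p _ => hle p).trans (sum_sqrt_childSup_le n x)
        _ = 2 * ‖f (n + 1) x‖ₑ ^ (1 / 2 : ℝ) := by rw [h.1, h.2]
        _ ≤ 2 * (⨆ k, ‖f k x‖ₑ) ^ (1 / 2 : ℝ) := by
            gcongr
            exact le_iSup (‖f · x‖ₑ) (n + 1)
    · rwa [sum_range_succ, peakSqrt, if_neg h, add_zero]

theorem tsum_peakSqrt_le (x : G m) :
    ∑' p, peakSqrt m f p x ≤ 2 * (⨆ k, ‖f k x‖ₑ) ^ (1 / 2 : ℝ) := by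
  rw [ENNReal.tsum_eq_iSup_nat]
  exact iSup_le fun n => sum_peakSqrt_le n x

end Stopping

section Adapted

variable {f : ℕ → G m → ℂ}

theorem dependsOn_childSup (n : ℕ) (hd : DependsOn (f (n + 1)) (Set.Iio (n + 1))) :
    DependsOn (childSup m f n) (Set.Iio n) := fun x y h => by
  have hupdate : ∀ c, f (n + 1) (Function.update x n c) = f (n + 1) (Function.update y n c) :=
    fun c => hd fun j hj => by
      rcases eq_or_ne j n with rfl | hjn
      · simp
      · rw [Function.update_of_ne hjn, Function.update_of_ne hjn,
          h j ((Nat.lt_succ_iff.1 hj).lt_of_ne hjn)]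
  simp only [childSup, hupdate]

theorem dependsOn_lastStop (hd : ∀ n, DependsOn (f n) (Set.Iio n)) (n : ℕ) :
    DependsOn (lastStop m f n) (Set.Iio n) := by
  induction n with
  | zero => exact fun _ _ _ => rfl
  | succ n ih =>
    intro x y h
    have hchild : ∀ k ≤ n + 1, childSup m f k x = childSup m f k y := fun k hk =>
      dependsOn_childSup k (hd _) fun j hj => h j (lt_of_lt_of_le hj hk)
    have hlast : lastStop m f n x = lastStop m f n y := ih fun j hj => h j (Nat.lt_succ_of_lt hj)
    rw [lastStop, lastStop, hchild _ le_rfl, hchild _ ((lastStop_le n x).trans n.le_succ), hlast]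

theorem dependsOn_atomHeight (hd : ∀ n, DependsOn (f n) (Set.Iio n)) (p : ℕ) :
    DependsOn (atomHeight m f p) (Set.Iio p) := fun x y h => by
  rw [atomHeight, atomHeight, dependsOn_lastStop hd p h, dependsOn_childSup p (hd _) h]

theorem dependsOn_peakSqrt (hd : ∀ n, DependsOn (f n) (Set.Iio n)) (p : ℕ) :
    DependsOn (peakSqrt m f p) (Set.Iio (p + 1)) := fun x y h => by
  have hp : ∀ i ∈ Set.Iio p, x i = y i := fun i hi => h i (Nat.lt_succ_of_lt hi)
  rw [peakSqrt, peakSqrt, dependsOn_lastStop hd p hp, dependsOn_childSup p (hd _) hp, hd (p + 1) h]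

theorem dependsOn_atomSum (hd : ∀ n, DependsOn (f n) (Set.Iio n)) (N p : ℕ) :
    DependsOn (atomSum m f N p) (Set.Iio N) := fun x y h => by
  refine sum_congr rfl fun k hk => ?_
  have hIio : ∀ j ≤ N, ∀ i ∈ Set.Iio j, x i = y i := fun j hj i hi => h i (lt_of_lt_of_le hi hj)
  have hkN := mem_range.1 hk
  rw [dependsOn_lastStop hd k (hIio k hkN.le), hd k (hIio k hkN.le), hd (k + 1) (hIio _ hkN)]

variable [∀ n, Fact (1 < m n)] {μ : Measure (G m)} {B : ℕ}

theorem IsUniform.lintegral_sqrt_atomHeight_le (hμ : IsUniform m μ) (hB : ∀ n, m n ≤ B)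
    (hd : ∀ n, DependsOn (f n) (Set.Iio n)) (p : ℕ) :
    ∫⁻ x, atomHeight m f p x ^ (1 / 2 : ℝ) ∂μ ≤ 3 * B * ∫⁻ x, peakSqrt m f p x ∂μ := by
  have hnine : (9 : ℝ≥0∞) ^ (1 / 2 : ℝ) = 3 := by
    rw [show (9 : ℝ≥0∞) = 3 ^ (2 : ℝ) by norm_num, ← ENNReal.rpow_mul]
    norm_num
  have hpoint : ∀ x, atomHeight m f p x ^ (1 / 2 : ℝ) ≤
      3 * freeAvg m μ (p + 1) p (peakSqrt m f p) x := fun x => by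
    rw [hμ.freeAvg_eq_sum p.lt_succ_self (dependsOn_peakSqrt hd p), atomHeight]
    split_ifs with hp
    · obtain ⟨c, hc⟩ := exists_eq_ciSup_of_finite
        (f := fun c : ZMod (m p) => ‖f (p + 1) (Function.update x p c)‖ₑ)
      have hupdate : ∀ i ∈ Set.Iio p, Function.update x p c i = x i := fun i hi =>
        Function.update_of_ne (ne_of_lt hi) _ _
      have hpeak : peakSqrt m f p (Function.update x p c) = childSup m f p x ^ (1 / 2 : ℝ) := by
        rw [peakSqrt, dependsOn_lastStop hd p hupdate, dependsOn_childSup p (hd _) hupdate,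
          if_pos ⟨hp, hc⟩]
      rw [ENNReal.mul_rpow_of_nonneg _ _ one_half_pos.le, hnine, ← hpeak]
      gcongr
      exact single_le_sum (f := fun c => peakSqrt m f p (Function.update x p c))
        (fun _ _ => zero_le) (mem_univ c)
    · simp
  calc ∫⁻ x, atomHeight m f p x ^ (1 / 2 : ℝ) ∂μ
      ≤ 3 * ∫⁻ x, freeAvg m μ (p + 1) p (peakSqrt m f p) x ∂μ := by
        rw [← lintegral_const_mul' _ _ (by finiteness)]
        exact lintegral_mono hpoint
    _ ≤ 3 * (B * ∫⁻ x, peakSqrt m f p x ∂μ) := by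
        gcongr
        exact hμ.lintegral_freeAvg_le hB _ _ (measurable_of_dependsOn (dependsOn_peakSqrt hd p))
    _ = 3 * B * ∫⁻ x, peakSqrt m f p x ∂μ := (mul_assoc _ _ _).symm

end Adapted

section Cancellation

variable [∀ n, Fact (1 < m n)] {μ : Measure (G m)} {f : ℕ → G m → ℂ}

theorem IsUniform.enorm_le_childSup (hμ : IsUniform m μ) (hf : IsMartingale m μ f) (n : ℕ)
    (x : G m) : ‖f n x‖ₑ ≤ childSup m f n x := by
  have := hμ.isProbabilityMeasure
  have hcyl : MeasurableSet[filt m n] (cyl m n x) :=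
    ⟨{w | ∀ i : Fin n, w i = x i}, (Set.toFinite _).measurableSet,
      Set.ext fun y => ⟨fun h j hj => h ⟨j, hj⟩, fun h i => h i i.2⟩⟩
  have hleft : ‖∫ t in cyl m n x, f n t ∂μ‖ₑ = ‖f n x‖ₑ * (MM m n : ℝ≥0∞)⁻¹ := by
    rw [setIntegral_congr_fun (g := fun _ => f n x) (measurableSet_cyl n x)
      fun t ht => hf.dependsOn n ht, setIntegral_const, enorm_smul, mul_comm, Measure.real, hμ,
      Real.enorm_of_nonneg ENNReal.toReal_nonneg,
      ENNReal.ofReal_toReal (ENNReal.inv_ne_top.2 (MM_ne_zero n))]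
  have hright : ‖∫ t in cyl m n x, f (n + 1) t ∂μ‖ₑ ≤ childSup m f n x * (MM m n : ℝ≥0∞)⁻¹ := by
    rw [← hμ.setLIntegral_cyl (dependsOn_childSup n (hf.dependsOn _)) x]
    exact (enorm_integral_le_lintegral_enorm _).trans
      (lintegral_mono fun t => enorm_succ_le_childSup n t)
  rw [hf.2.2 n _ hcyl, hleft] at hright
  exact (ENNReal.mul_le_mul_iff_left (ENNReal.inv_ne_zero.2 (ENNReal.natCast_ne_top _))
    (ENNReal.inv_ne_top.2 (MM_ne_zero n))).1 hright

variable [IsFiniteMeasure μ]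

theorem IsMartingale.fejerConv_eq_add_sum (hf : IsMartingale m μ f) {n N : ℕ} (hn : n ≤ MM m N)
    (x : G m) : fejerConv m μ n (f N) x =
      fejerConv m μ n (f 0) x + ∑ p ∈ range N, fejerConv m μ n (atomSum m f N p) x := by
  have hint : ∀ p ∈ range N, Integrable (fun t => atomSum m f N p t * K m n (x - t)) μ :=
    fun p _ => integrable_mul_comp_sub (dependsOn_atomSum hf.dependsOn N p) (dependsOn_K hn) x
  have hint₀ : Integrable (fun t => f 0 t * K m n (x - t)) μ :=
    integrable_mul_comp_sub ((hf.dependsOn 0).mono (Set.Iio_subset_Iio N.zero_le))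
      (dependsOn_K hn) x
  simp only [fejerConv]
  rw [← integral_finsetSum _ hint, ← integral_add hint₀ (integrable_finsetSum _ hint)]
  simp only [eq_add_sum_atomSum N, add_mul, sum_mul]

theorem IsMartingale.fejerConv_atomSum_eq_zero (hf : IsMartingale m μ f) {n p : ℕ}
    (hn : n ≤ MM m p) (N : ℕ) (x : G m) : fejerConv m μ n (atomSum m f N p) x = 0 := by
  let u : ℕ → G m → ℂ := fun k t => if lastStop m f k t = p then K m n (x - t) else 0
  have hu : ∀ k, DependsOn (u k) (Set.Iio k) := fun k s t h => by
    rcases lt_or_ge k p with hk | hk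
    · have hne : ∀ y, lastStop m f k y ≠ p := fun y => ((lastStop_le k y).trans_lt hk).ne
      simp only [u, if_neg (hne _)]
    · have hK := dependsOn_comp_sub (dependsOn_K hn) x fun i hi => h i (lt_of_lt_of_le hi hk)
      simp only [u, dependsOn_lastStop hf.dependsOn k h, hK]
  have hint : ∀ k, ∀ j ≤ k + 1, Integrable (fun t => f j t * u k t) μ := fun k j hj =>
    integrable_of_dependsOn (n := k + 1) fun s t h => congrArg₂ _
      (hf.dependsOn j fun i hi => h i (lt_of_lt_of_le hi hj))
      (hu k fun i hi => h i (Nat.lt_succ_of_lt hi))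
  have hsum : ∀ t, atomSum m f N p t * K m n (x - t) =
      ∑ k ∈ range N, (f (k + 1) t * u k t - f k t * u k t) := fun t => by
    rw [atomSum, sum_mul]
    refine sum_congr rfl fun k _ => ?_
    simp only [u]
    split_ifs <;> ring
  simp only [fejerConv, hsum]
  refine (integral_finsetSum _ fun k _ => (hint k _ le_rfl).sub (hint k k k.le_succ)).trans
    (sum_eq_zero fun k _ => ?_)
  exact (integral_sub (hint k _ le_rfl) (hint k k k.le_succ)).trans
    (sub_eq_zero.2 (hf.integral_mul_eq k.le_succ (hu k)))

end Cancellation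

/-! ### The maximal inequality -/

section Logarithm

variable [∀ n, Fact (1 < m n)] {n p : ℕ}

theorem succ_div_four_le_log (h : MM m p ≤ n) : (p + 1 : ℝ) / 4 ≤ Real.log (n + 1) := by
  have hpow : (2 : ℝ) ^ p ≤ n := by exact_mod_cast (two_pow_le_MM p).trans h
  have hone : (1 : ℝ) ≤ n := (one_le_pow₀ one_le_two).trans hpow
  have hsq : (2 : ℝ) ^ (p + 1) ≤ (n + 1) ^ 2 := by
    rw [pow_succ]
    nlinarith [hone]
  have hlog := Real.log_le_log (by positivity) hsq
  rw [Real.log_pow, Real.log_pow] at hlog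
  push_cast at hlog
  nlinarith [Real.log_two_gt_d9]

theorem inv_log_sq_le (h : MM m p ≤ n) :
    (ENNReal.ofReal (Real.log (n + 1) ^ 2))⁻¹ ≤ 16 * (p + 1 : ℝ≥0∞)⁻¹ ^ 2 := by
  have hle : ENNReal.ofReal ((p + 1 : ℝ) / 4) ≤ ENNReal.ofReal (Real.log (n + 1)) :=
    ENNReal.ofReal_le_ofReal (succ_div_four_le_log h)
  have hcast : ENNReal.ofReal ((p + 1 : ℝ) / 4) = (p + 1) / 4 := by
    rw [ENNReal.ofReal_div_of_pos four_pos, ENNReal.ofReal_add p.cast_nonneg zero_le_one]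
    simp
  calc (ENNReal.ofReal (Real.log (n + 1) ^ 2))⁻¹
      = (ENNReal.ofReal (Real.log (n + 1)))⁻¹ ^ 2 := by
        rw [ENNReal.ofReal_pow (Real.log_nonneg (by simp)), ENNReal.inv_pow]
    _ ≤ ((p + 1) / 4 : ℝ≥0∞)⁻¹ ^ 2 := by
        rw [← hcast]
        gcongr
    _ = 16 * (p + 1 : ℝ≥0∞)⁻¹ ^ 2 := by
        rw [ENNReal.inv_div (.inl (by simp)) (.inl (by simp)), div_eq_mul_inv, mul_pow]
        norm_num

end Logarithm

theorem rpow_tsum_le_tsum_rpow {ι : Type*} (a : ι → ℝ≥0∞) {r : ℝ} (hr₀ : 0 < r) (hr₁ : r ≤ 1) :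
    (∑' i, a i) ^ r ≤ ∑' i, a i ^ r := by
  rw [ENNReal.tsum_eq_iSup_sum, ← ENNReal.orderIsoRpow_apply r hr₀, OrderIso.map_iSup]
  exact iSup_le fun s => (rpow_sum_le_sum_rpow s a hr₀ hr₁).trans (ENNReal.sum_le_tsum s)

/-- The contribution of the atoms at level `p` to the majorant of `|σ_n f| / log² (n + 1)`. Only
levels with `M_p ≤ n` contribute, and there the logarithm is of order at least `p + 1`. -/
def levelMajorant (m : ℕ → ℕ) (μ : Measure (G m)) (B : ℕ) (f : ℕ → G m → ℂ) (p : ℕ) (x : G m) :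
    ℝ≥0∞ :=
  192 * B ^ 3 * (1 + 2 * B) * ((p + 1 : ℝ≥0∞)⁻¹ ^ 2 *
    ((MM m p : ℝ≥0∞)⁻¹ * convMajorantSum m μ p (atomHeight m f p) x))

section MaximalInequality

variable [∀ n, Fact (1 < m n)] {μ : Measure (G m)} {f : ℕ → G m → ℂ} {B : ℕ}

theorem IsUniform.enorm_mFej_le (hμ : IsUniform m μ) (hB : ∀ n, m n ≤ B) (hf : IsMartingale m μ f)
    {n : ℕ} (hn : n ≠ 0) (x : G m) :
    ‖mFej m μ f n x‖ₑ ≤ 2 * ∑ p ∈ range (n + 1) with MM m p ≤ n,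
      6 * B ^ 3 * (1 + 2 * B) *
        ((MM m p : ℝ≥0∞)⁻¹ * convMajorantSum m μ p (atomHeight m f p) x) := by
  have := hμ.isProbabilityMeasure
  have hheight := dependsOn_atomHeight hf.dependsOn
  have hN : n ≤ MM m (n + 1) := (lt_MM n).le.trans (MM_mono n.le_succ)
  have hzero : 0 ∈ {p ∈ range (n + 1) | MM m p ≤ n} := by
    simp [MM, Nat.one_le_iff_ne_zero.2 hn]
  set r : ℕ → ℝ≥0∞ := fun p => 6 * B ^ 3 * (1 + 2 * B) *
    ((MM m p : ℝ≥0∞)⁻¹ * convMajorantSum m μ p (atomHeight m f p) x)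
  have hinitial : ‖fejerConv m μ n (f 0) x‖ₑ ≤ r 0 := by
    refine hμ.enorm_fejerConv_le_convMajorantSum hB (mem_filter.1 hzero).2 (hheight 0)
      (fun t => ?_) x
    rw [atomHeight, lastStop, if_pos rfl]
    exact (hμ.enorm_le_childSup hf 0 t).trans (le_mul_of_one_le_left zero_le (by norm_num))
  have hatom : ∀ p, ‖fejerConv m μ n (atomSum m f (n + 1) p) x‖ₑ ≤ if MM m p ≤ n then r p else 0 :=
    fun p => by
      split_ifs with h
      · exact hμ.enorm_fejerConv_le_convMajorantSum hB h (hheight p)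
          (fun t => enorm_atomSum_le (hμ.enorm_le_childSup hf p t) _) x
      · rw [hf.fejerConv_atomSum_eq_zero (not_le.1 h).le, enorm_zero]
  rw [hf.mFej_eq_fejerConv hN, hf.fejerConv_eq_add_sum hN, two_mul]
  refine (enorm_add_le _ _).trans (add_le_add ?_ ?_)
  · exact hinitial.trans (single_le_sum (fun _ _ => zero_le) hzero)
  · rw [sum_filter]
    exact (enorm_sum_le _ _).trans (sum_le_sum fun p _ => hatom p)

theorem IsUniform.enorm_mFej_div_log_sq_le (hμ : IsUniform m μ) (hB : ∀ n, m n ≤ B)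
    (hf : IsMartingale m μ f) (n : ℕ) (x : G m) :
    ‖mFej m μ f n x‖ₑ / ENNReal.ofReal (Real.log (n + 1) ^ 2) ≤
      ∑' p, levelMajorant m μ B f p x := by
  rcases eq_or_ne n 0 with rfl | hn
  · simp [mFej]
  rw [div_eq_mul_inv]
  refine (mul_le_mul_left (hμ.enorm_mFej_le hB hf hn x) _).trans
    (le_trans ?_ (ENNReal.sum_le_tsum {p ∈ range (n + 1) | MM m p ≤ n}))
  rw [mul_sum, sum_mul]
  refine sum_le_sum fun p hp => (mul_le_mul_right (inv_log_sq_le (mem_filter.1 hp).2) _).trans_eq ?_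
  rw [levelMajorant]
  ring

theorem IsUniform.lintegral_sqrt_levelMajorant_le (hμ : IsUniform m μ) (hB : ∀ n, m n ≤ B)
    (hf : IsMartingale m μ f) (p : ℕ) :
    ∫⁻ x, levelMajorant m μ B f p x ^ (1 / 2 : ℝ) ∂μ ≤
      (192 * B ^ 3 * (1 + 2 * B) : ℝ≥0∞) ^ (1 / 2 : ℝ) * (12 * B ^ 2) *
        ∫⁻ x, peakSqrt m f p x ∂μ := by
  have hp : (p + 1 : ℝ≥0∞)⁻¹ * (p + 1) = 1 := ENNReal.inv_mul_cancel (by simp) (by finiteness)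
  have hMM : (MM m p : ℝ≥0∞)⁻¹ ^ (1 / 2 : ℝ) * (MM m p : ℝ≥0∞) ^ (1 / 2 : ℝ) = 1 := by
    rw [← ENNReal.mul_rpow_of_nonneg _ _ one_half_pos.le,
      ENNReal.inv_mul_cancel (MM_ne_zero p) (by finiteness), ENNReal.one_rpow]
  have hsq : ((p + 1 : ℝ≥0∞)⁻¹ ^ 2) ^ (1 / 2 : ℝ) = (p + 1 : ℝ≥0∞)⁻¹ := by
    rw [← ENNReal.rpow_two, ← ENNReal.rpow_mul]
    norm_num
  have hinv : (p + 1 : ℝ≥0∞)⁻¹ ≠ ⊤ := by simp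
  have hMinv : (MM m p : ℝ≥0∞)⁻¹ ≠ ⊤ := ENNReal.inv_ne_top.2 (MM_ne_zero p)
  simp only [levelMajorant, ENNReal.mul_rpow_of_nonneg _ _ one_half_pos.le, hsq]
  rw [lintegral_const_mul' _ _ (by finiteness), lintegral_const_mul' _ _ hinv,
    lintegral_const_mul' _ _ (by finiteness), mul_assoc _ (12 * _ : ℝ≥0∞)]
  gcongr _ * ?_
  calc _ ≤ (p + 1 : ℝ≥0∞)⁻¹ * ((MM m p : ℝ≥0∞)⁻¹ ^ (1 / 2 : ℝ) *
          (4 * B * ((p + 1) * (MM m p : ℝ≥0∞) ^ (1 / 2 : ℝ)) *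
            (3 * B * ∫⁻ x, peakSqrt m f p x ∂μ))) := by
        gcongr
        refine (hμ.lintegral_sqrt_convMajorantSum_le hB
          (dependsOn_atomHeight hf.dependsOn p)).trans ?_
        gcongr
        exact hμ.lintegral_sqrt_atomHeight_le hB hf.dependsOn p
    _ = ((p + 1 : ℝ≥0∞)⁻¹ * (p + 1)) *
          ((MM m p : ℝ≥0∞)⁻¹ ^ (1 / 2 : ℝ) * (MM m p : ℝ≥0∞) ^ (1 / 2 : ℝ)) *
          (12 * B ^ 2 * ∫⁻ x, peakSqrt m f p x ∂μ) := by ring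
    _ = 12 * B ^ 2 * ∫⁻ x, peakSqrt m f p x ∂μ := by rw [hp, hMM, one_mul, one_mul]

theorem measurable_levelMajorant [SFinite μ] (B p : ℕ) (hd : ∀ n, DependsOn (f n) (Set.Iio n)) :
    Measurable (levelMajorant m μ B f p) :=
  (((measurable_convMajorantSum p
    (measurable_of_dependsOn (dependsOn_atomHeight hd p))).const_mul _).const_mul _).const_mul _

theorem IsUniform.lintegral_sqrt_iSup_mFej_le (hμ : IsUniform m μ) (hB : ∀ n, m n ≤ B)
    (hf : IsMartingale m μ f) :
    ∫⁻ x, (⨆ n : ℕ, ‖mFej m μ f n x‖ₑ / ENNReal.ofReal (Real.log (n + 1) ^ 2)) ^ (1 / 2 : ℝ) ∂μ ≤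
      (192 * B ^ 3 * (1 + 2 * B) : ℝ≥0∞) ^ (1 / 2 : ℝ) * (12 * B ^ 2) * 2 *
        ∫⁻ x, (⨆ n : ℕ, ‖f n x‖ₑ) ^ (1 / 2 : ℝ) ∂μ := by
  have := hμ.isProbabilityMeasure
  set C : ℝ≥0∞ := (192 * B ^ 3 * (1 + 2 * B) : ℝ≥0∞) ^ (1 / 2 : ℝ) * (12 * B ^ 2)
  calc _ ≤ ∫⁻ x, ∑' p, levelMajorant m μ B f p x ^ (1 / 2 : ℝ) ∂μ := by
        gcongr with x
        refine le_trans ?_ (rpow_tsum_le_tsum_rpow _ one_half_pos one_half_lt_one.le)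
        gcongr
        exact iSup_le fun n => hμ.enorm_mFej_div_log_sq_le hB hf n x
    _ = ∑' p, ∫⁻ x, levelMajorant m μ B f p x ^ (1 / 2 : ℝ) ∂μ :=
        lintegral_tsum fun p =>
          ((measurable_levelMajorant B p hf.dependsOn).pow_const _).aemeasurable
    _ ≤ ∑' p, C * ∫⁻ x, peakSqrt m f p x ∂μ :=
        ENNReal.tsum_le_tsum fun p => hμ.lintegral_sqrt_levelMajorant_le hB hf p
    _ = C * ∫⁻ x, ∑' p, peakSqrt m f p x ∂μ := by
        rw [ENNReal.tsum_mul_left, lintegral_tsum fun p =>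
          (measurable_of_dependsOn (dependsOn_peakSqrt hf.dependsOn p)).aemeasurable]
    _ ≤ C * ∫⁻ x, 2 * (⨆ n : ℕ, ‖f n x‖ₑ) ^ (1 / 2 : ℝ) ∂μ := by
        gcongr with x
        exact tsum_peakSqrt_le x
    _ = C * 2 * ∫⁻ x, (⨆ n : ℕ, ‖f n x‖ₑ) ^ (1 / 2 : ℝ) ∂μ := by
        rw [lintegral_const_mul' _ _ (by finiteness), ← mul_assoc]

end MaximalInequality

theorem statement3_general (B : ℕ) :
    ∃ c : ℝ≥0, ∀ m : ℕ → ℕ, (∀ n, 2 ≤ m n) → (∀ n, m n ≤ B) →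
      ∀ μ : Measure (G m), IsUniform m μ → ∀ f : ℕ → G m → ℂ, IsMartingale m μ f →
        lpNormE m μ (1 / 2)
            (fun x => ⨆ n : ℕ, (‖mFej m μ f n x‖₊ : ℝ≥0∞) /
              ENNReal.ofReal (Real.log (n + 1) ^ 2)) ≤
          (c : ℝ≥0∞) * HpNorm m μ (1 / 2) f := by
  let C : ℝ≥0∞ := (192 * B ^ 3 * (1 + 2 * B) : ℝ≥0∞) ^ (1 / 2 : ℝ) * (12 * B ^ 2) * 2
  have hC : C ^ (1 / (1 / 2) : ℝ) ≠ ⊤ := by finiteness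
  refine ⟨(C ^ (1 / (1 / 2) : ℝ)).toNNReal, fun m hm hB μ hμ f hf => ?_⟩
  have : ∀ n, Fact (1 < m n) := fun n => ⟨hm n⟩
  rw [ENNReal.coe_toNNReal hC, HpNorm, lpNormE, lpNormE,
    ← ENNReal.mul_rpow_of_nonneg _ _ (by norm_num)]
  exact ENNReal.rpow_le_rpow (hμ.lintegral_sqrt_iSup_mFej_le hB hf) (by norm_num)

/-- There is an absolute constant `c` (depending only on `sup_n m_n`) such
that for every martingale `f ∈ H_{1/2}(G_m)`,
`‖ sup_n |σ_n f| / log^2(n+1) ‖_{1/2} ≤ c ‖f‖_{H_{1/2}}`, where `σ_n` is the `n`-th Fejér mean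
of the Vilenkin-Fourier series. -/
theorem statement3
    (m : ℕ → ℕ) (hm : ∀ n, 2 ≤ m n) (hmb : ∃ B, ∀ n, m n ≤ B)
    (μ : Measure (G m)) [IsProbabilityMeasure μ]
    (hμ : ∀ (n : ℕ) (x : G m), μ (cyl m n x) = ((MM m n : ℝ≥0∞))⁻¹) :
    ∃ c : ℝ≥0, ∀ f : ℕ → G m → ℂ, IsMartingale m μ f →
      HpNorm m μ (1 / 2) f < ⊤ →
      lpNormE m μ (1 / 2)
          (fun x => ⨆ n : ℕ, (‖mFej m μ f n x‖₊ : ℝ≥0∞) /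
            ENNReal.ofReal (Real.log (n + 1) ^ 2)) ≤
        (c : ℝ≥0∞) * HpNorm m μ (1 / 2) f := by
  obtain ⟨B, hB⟩ := hmb
  exact (statement3_general B).imp fun _ hc f hf _ => hc m hm hB μ hμ f hf

end Vilenkin
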